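/- Let 1 < p < q < p*. For every open bounded convex set Ω ⊂ ℝ^N and every open ball B ⊂ ℝ^N one has the strict inequality μ_{p,q}(Ω) < λ_{p,q}(B) · (diam(B)/diam(Ω))^{p + Np/q − N}. -/

import Mathlib

open MeasureTheory Metric Set Real

noncomputable section

/-- The Rayleigh quotient `(∫_Ω |∇v|^p) / (∫_Ω |v|^q)^(p/q)`, where the gradient is
understood as the (a.e. defined) Fréchet derivative. -/
def rayleighQuot {N : ℕ} (p q : ℝ) (Ω : Set (EuclideanSpace ℝ (Fin N)))
    (v : EuclideanSpace ℝ (Fin N) → ℝ) : ℝ :=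
  (∫ x in Ω, ‖fderiv ℝ v x‖ ^ p) / (∫ x in Ω, |v x| ^ q) ^ (p / q)

/-- The first (generalized) Dirichlet eigenvalue `λ_{p,q}(Ω)`: infimum of the Rayleigh
quotient over nontrivial smooth functions compactly supported in `Ω`. -/
def lambdaPQ {N : ℕ} (p q : ℝ) (Ω : Set (EuclideanSpace ℝ (Fin N))) : ℝ :=
  sInf { R : ℝ | ∃ v : EuclideanSpace ℝ (Fin N) → ℝ,
    ContDiff ℝ (⊤ : ℕ∞) v ∧ HasCompactSupport v ∧ tsupport v ⊆ Ω ∧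
    (∃ x ∈ Ω, v x ≠ 0) ∧ R = rayleighQuot p q Ω v }

/-- The first nontrivial (generalized) Neumann eigenvalue `μ_{p,q}(Ω)`: infimum of the
Rayleigh quotient over nontrivial Lipschitz functions on the closure of `Ω` satisfying
the constraint `∫_Ω |v|^(q-2) v = 0`. -/
def muPQ {N : ℕ} (p q : ℝ) (Ω : Set (EuclideanSpace ℝ (Fin N))) : ℝ :=
  sInf { R : ℝ | ∃ v : EuclideanSpace ℝ (Fin N) → ℝ, ∃ K : NNReal,
    LipschitzOnWith K v (closure Ω) ∧ (∃ x ∈ Ω, v x ≠ 0) ∧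
    (∫ x in Ω, |v x| ^ (q - 2) * v x) = 0 ∧ R = rayleighQuot p q Ω v }

/-- `q` is below the critical Sobolev exponent `p* = Np/(N-p)` (with `p* = ∞` if `p ≥ N`). -/
def ltCritical (N : ℕ) (p q : ℝ) : Prop := p < N → q < N * p / (N - p)

end

/-!
Let `R = diam Ω / 2`, `l = λ_{p,q}(B_R)`, and let `w` be a radially nonincreasing Lipschitz function
vanishing outside `B_R`, with `‖w‖_q = 1` and energy at most `l + ε`. It exists by Schwarz
symmetrization, obtained here by minimizing the second moment among the rearrangements of a given
function which do not increase its nonlocal energies `∬ k(|x - y|) |w x - w y|^p`: a minimizer is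
invariant under all polarizations towards the origin, hence radial, and the nonlocal energies
converge to the gradient energy.

On an open bounded set `D` which is star-shaped about the centre, `∫_D |∇w|^p ≤ l ∫_D w^q + ε`. In
polar coordinates this reduces to the case of a ball, where one truncates `w` from above and tests
`l` with the result. Translates of `w` to the two endpoints of a diameter of `Ω` have disjoint
supports, and a combination of them with opposite signs satisfies the constraint in the definition
of `μ_{p,q}(Ω)`. By Hölder's inequality `μ_{p,q}(Ω) ≤ (l + O(ε)) m^(1 - p/q)`, where `m` is the sum
of the masses of `w^q` in the two sets obtained by translating the endpoints to the origin. These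
sets are disjoint, and both avoid an open set `U` containing the hyperplane orthogonal to the
diameter, up to the origin. Near-minimizers do not concentrate at the origin, so `U` carries a mass
of `w^q` bounded below independently of `ε`. Hence `m ≤ 1 - κ` with `κ > 0`, and `p < q` makes the
inequality strict as `ε → 0`.
-/

open Filter Topology Module

section ConvexRearrangement

lemma convexOn_abs_rpow {p : ℝ} (hp : 1 ≤ p) : ConvexOn ℝ univ fun x : ℝ => |x| ^ p := by
  have hrange : Convex ℝ ((fun x : ℝ => |x|) '' univ) :=
    (isPreconnected_univ.image _ continuous_abs.continuousOn).ordConnected.convex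
  refine ConvexOn.comp (g := fun x : ℝ => x ^ p) (f := fun x => |x|)
    ((convexOn_rpow hp).subset ?_ hrange) convexOn_univ_norm ?_
  · rintro _ ⟨x, -, rfl⟩
    exact abs_nonneg x
  · rintro _ ⟨x, -, rfl⟩ _ - hxy
    exact rpow_le_rpow (abs_nonneg x) hxy (by linarith)

/-- Writing `y = a x + b w` with `a + b = 1` forces `z = b x + a w`. -/
lemma convexOn_add_le_add_of_add_eq {φ : ℝ → ℝ} (hφ : ConvexOn ℝ univ φ) {x y z w : ℝ}
    (hxy : x ≤ y) (hxz : x ≤ z) (h : x + w = y + z) : φ y + φ z ≤ φ x + φ w := by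
  obtain ⟨a, b, ha, hb, hab, rfl⟩ :=
    (Convex.mem_Icc (by linarith : x ≤ w)).1 (⟨hxy, by linarith⟩ : y ∈ Icc x w)
  obtain rfl : b * x + a * w = z := by linear_combination h + (x + w) * hab
  have hy := hφ.2 (mem_univ x) (mem_univ w) ha hb hab
  have hz := hφ.2 (mem_univ x) (mem_univ w) hb ha (by rw [add_comm, hab])
  simp only [smul_eq_mul] at hy hz
  linear_combination hy + hz + (φ x + φ w) * hab

lemma convexOn_sub_add_sub_le {φ : ℝ → ℝ} (hφ : ConvexOn ℝ univ φ) {a a' b b' : ℝ}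
    (ha : a' ≤ a) (hb : b ≤ b') :
    φ (a - b') + φ (a' - b) ≤ φ (a - b) + φ (a' - b') := by
  rw [add_comm (φ (a - b)) (φ (a' - b'))]
  exact convexOn_add_le_add_of_add_eq hφ (by linarith) (by linarith) (by ring)

lemma convexOn_weighted_max_min_le {φ : ℝ → ℝ} (hφ : ConvexOn ℝ univ φ) {k₁ k₂ : ℝ}
    (hk : k₂ ≤ k₁) (a a' b b' : ℝ) :
    k₁ * (φ (max a a' - max b b') + φ (min a a' - min b b')) +
      k₂ * (φ (max a a' - min b b') + φ (min a a' - max b b')) ≤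
    k₁ * (φ (a - b) + φ (a' - b')) + k₂ * (φ (a - b') + φ (a' - b)) := by
  rcases le_total a a' with ha | ha <;> rcases le_total b b' with hb | hb <;>
    simp only [max_eq_left, max_eq_right, min_eq_left, min_eq_right, ha, hb]
  · linarith
  · have := convexOn_sub_add_sub_le hφ ha hb
    nlinarith
  · have := convexOn_sub_add_sub_le hφ ha hb
    nlinarith
  · linarith

lemma abs_max_sub_min_le {a a' b b' C : ℝ} (hab : |a - b| ≤ C) (hab' : |a - b'| ≤ C)
    (ha'b : |a' - b| ≤ C) (ha'b' : |a' - b'| ≤ C) : |max a a' - min b b'| ≤ C := by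
  rcases max_choice a a' with h | h <;> rcases min_choice b b' with h' | h' <;>
    rw [h, h'] <;> assumption

end ConvexRearrangement

section Reflection

variable {E : Type*} [NormedAddCommGroup E] [InnerProductSpace ℝ E]

/-- The orthogonal reflection across the hyperplane `{x | ⟪n, x⟫ = t}`, where `n` is meant to be a
unit vector. -/
noncomputable def hyperplaneReflection (n : E) (t : ℝ) (x : E) : E :=
  x - (2 * (inner ℝ n x - t)) • n

@[fun_prop]
lemma continuous_hyperplaneReflection (n : E) (t : ℝ) : Continuous (hyperplaneReflection n t) := by
  unfold hyperplaneReflection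
  fun_prop

lemma hyperplaneReflection_of_inner_eq {n : E} {t : ℝ} {x : E} (hx : inner ℝ n x = t) :
    hyperplaneReflection n t x = x := by
  simp [hyperplaneReflection, hx]

variable {n : E} (hn : ‖n‖ = 1) (t : ℝ)
include hn

lemma inner_hyperplaneReflection_sub (x : E) :
    inner ℝ n (hyperplaneReflection n t x) - t = -(inner ℝ n x - t) := by
  simp only [hyperplaneReflection, inner_sub_right, inner_smul_right, inner_self_eq_norm_sq_to_K,
    hn]
  norm_num
  ring

lemma hyperplaneReflection_involutive : Function.Involutive (hyperplaneReflection n t) := by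
  intro x
  rw [hyperplaneReflection, inner_hyperplaneReflection_sub hn, hyperplaneReflection]
  module

lemma norm_sub_hyperplaneReflection_sq (x y : E) :
    ‖x - hyperplaneReflection n t y‖ ^ 2 =
      ‖x - y‖ ^ 2 + 4 * (inner ℝ n x - t) * (inner ℝ n y - t) := by
  have hsplit : x - hyperplaneReflection n t y = (x - y) + (2 * (inner ℝ n y - t)) • n := by
    rw [hyperplaneReflection]
    module
  rw [hsplit, norm_add_sq_real, norm_smul, hn, inner_smul_right, inner_sub_left,
    real_inner_comm n x, real_inner_comm n y, mul_one, Real.norm_eq_abs, sq_abs]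
  ring

lemma norm_hyperplaneReflection_sq (x : E) :
    ‖hyperplaneReflection n t x‖ ^ 2 = ‖x‖ ^ 2 - 4 * t * (inner ℝ n x - t) := by
  have h := norm_sub_hyperplaneReflection_sq hn t 0 x
  simp only [zero_sub, norm_neg, inner_zero_right] at h
  rw [h]
  ring

lemma norm_hyperplaneReflection_sub (x y : E) :
    ‖hyperplaneReflection n t x - hyperplaneReflection n t y‖ = ‖x - y‖ := by
  refine (pow_left_inj₀ (norm_nonneg _) (norm_nonneg _) two_ne_zero).1 ?_
  rw [norm_sub_hyperplaneReflection_sq hn, inner_hyperplaneReflection_sub hn, norm_sub_rev,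
    norm_sub_hyperplaneReflection_sq hn, norm_sub_rev]
  ring

lemma norm_hyperplaneReflection_sub_left (x y : E) :
    ‖hyperplaneReflection n t x - y‖ = ‖x - hyperplaneReflection n t y‖ := by
  rw [← norm_hyperplaneReflection_sub hn t, hyperplaneReflection_involutive hn]

lemma norm_sub_le_norm_sub_hyperplaneReflection {x y : E}
    (h : 0 ≤ (inner ℝ n x - t) * (inner ℝ n y - t)) :
    ‖x - y‖ ≤ ‖x - hyperplaneReflection n t y‖ := by
  rw [← sq_le_sq₀ (norm_nonneg _) (norm_nonneg _), norm_sub_hyperplaneReflection_sq hn]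
  linarith

lemma norm_sub_hyperplaneReflection_le_norm_sub {x y : E}
    (h : (inner ℝ n x - t) * (inner ℝ n y - t) ≤ 0) :
    ‖x - hyperplaneReflection n t y‖ ≤ ‖x - y‖ := by
  rw [← sq_le_sq₀ (norm_nonneg _) (norm_nonneg _), norm_sub_hyperplaneReflection_sq hn]
  linarith

lemma isClosedEmbedding_hyperplaneReflection :
    IsClosedEmbedding (hyperplaneReflection n t) :=
  (Homeomorph.mk (hyperplaneReflection_involutive hn t).toPerm
    (continuous_hyperplaneReflection n t) (continuous_hyperplaneReflection n t)).isClosedEmbedding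

lemma measurePreserving_hyperplaneReflection [FiniteDimensional ℝ E] [MeasurableSpace E]
    [BorelSpace E] : MeasurePreserving (hyperplaneReflection n t) (volume : Measure E) volume := by
  have hcomp : hyperplaneReflection n t =
      (fun x => x + (2 * t) • n) ∘ (ℝ ∙ n)ᗮ.reflection := by
    ext x
    simp only [Function.comp, hyperplaneReflection, Submodule.reflection_orthogonal_apply,
      Submodule.reflection_singleton_apply, hn]
    simp only [RCLike.ofReal_real_eq_id, id_eq, one_pow, div_one, neg_sub]
    module
  rw [hcomp]
  exact (measurePreserving_add_right _ _).comp (ℝ ∙ n)ᗮ.reflection.measurePreserving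

end Reflection

section Polarization

variable {E : Type*} [NormedAddCommGroup E] [InnerProductSpace ℝ E]

/-- The two-point rearrangement (polarization) of `w` across the hyperplane `{x | ⟪n, x⟫ = t}`: of
the two values of `w` at a pair of mirror points, the larger is moved to `{x | ⟪n, x⟫ ≤ t}`. -/
noncomputable def polarization (n : E) (t : ℝ) (w : E → ℝ) (x : E) : ℝ :=
  if inner ℝ n x ≤ t then max (w x) (w (hyperplaneReflection n t x))
  else min (w x) (w (hyperplaneReflection n t x))

lemma polarization_mem {S : Set ℝ} {w : E → ℝ} (hw : ∀ x, w x ∈ S) (n : E) (t : ℝ) (x : E) :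
    polarization n t w x ∈ S := by
  unfold polarization
  split_ifs
  · rcases max_choice (w x) (w (hyperplaneReflection n t x)) with h | h <;> rw [h] <;> apply hw
  · rcases min_choice (w x) (w (hyperplaneReflection n t x)) with h | h <;> rw [h] <;> apply hw

lemma measurable_polarization [MeasurableSpace E] [BorelSpace E] (n : E) (t : ℝ) {w : E → ℝ}
    (hw : Measurable w) : Measurable (polarization n t w) := by
  have hσ := (continuous_hyperplaneReflection n t).measurable
  exact Measurable.ite (isClosed_le (by fun_prop) continuous_const).measurableSet (by fun_prop)
    (by fun_prop)

variable {n : E} (hn : ‖n‖ = 1) (t : ℝ)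
include hn

lemma polarization_eq_max_or_min (w : E → ℝ) (x : E) :
    (inner ℝ n x ≤ t ∧
      polarization n t w x = max (w x) (w (hyperplaneReflection n t x)) ∧
      polarization n t w (hyperplaneReflection n t x) =
        min (w x) (w (hyperplaneReflection n t x))) ∨
    (t ≤ inner ℝ n x ∧
      polarization n t w x = min (w x) (w (hyperplaneReflection n t x)) ∧
      polarization n t w (hyperplaneReflection n t x) =
        max (w x) (w (hyperplaneReflection n t x))) := by
  have hreflect := inner_hyperplaneReflection_sub hn t x
  unfold polarization
  rw [hyperplaneReflection_involutive hn]
  rcases lt_trichotomy (inner ℝ n x) t with hx | hx | hx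
  · rw [if_pos hx.le, if_neg (by linarith), min_comm]
    exact Or.inl ⟨hx.le, rfl, rfl⟩
  · rw [hyperplaneReflection_of_inner_eq hx]
    simp [hx]
  · rw [if_neg hx.not_ge, if_pos (by linarith), max_comm]
    exact Or.inr ⟨hx.le, rfl, rfl⟩

lemma polarization_add_polarization_hyperplaneReflection (F : ℝ → ℝ) (w : E → ℝ) (x : E) :
    F (polarization n t w x) + F (polarization n t w (hyperplaneReflection n t x)) =
      F (w x) + F (w (hyperplaneReflection n t x)) := by
  rcases polarization_eq_max_or_min hn t w x with ⟨-, h, h'⟩ | ⟨-, h, h'⟩ <;> rw [h, h'] <;>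
    rcases le_total (w x) (w (hyperplaneReflection n t x)) with h | h <;> simp [h, add_comm]

lemma lipschitzWith_polarization {w : E → ℝ} {K : NNReal} (hw : LipschitzWith K w) :
    LipschitzWith K (polarization n t w) := by
  refine LipschitzWith.of_dist_le_mul fun x y => ?_
  have hbound : ∀ {u v : E}, ‖u - v‖ ≤ ‖x - y‖ → |w u - w v| ≤ K * dist x y := fun h => by
    refine (hw.dist_le_mul _ _).trans (mul_le_mul_of_nonneg_left ?_ K.2)
    rwa [dist_eq_norm, dist_eq_norm]
  have hreflect := hbound (norm_hyperplaneReflection_sub hn t x y).le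
  have hcross : (inner ℝ n x - t) * (inner ℝ n y - t) ≤ 0 →
      |w x - w (hyperplaneReflection n t y)| ≤ K * dist x y ∧
        |w (hyperplaneReflection n t x) - w y| ≤ K * dist x y := fun h =>
    have hle := norm_sub_hyperplaneReflection_le_norm_sub hn t h
    ⟨hbound hle, hbound ((norm_hyperplaneReflection_sub_left hn t x y).trans_le hle)⟩
  rw [Real.dist_eq]
  unfold polarization
  split_ifs with hx hy hy
  · exact (abs_max_sub_max_le_max _ _ _ _).trans (max_le (hbound le_rfl) hreflect)
  · obtain ⟨h, h'⟩ := hcross (mul_nonpos_of_nonpos_of_nonneg (by linarith) (by linarith))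
    exact abs_max_sub_min_le (hbound le_rfl) h h' hreflect
  · obtain ⟨h, h'⟩ := hcross (mul_nonpos_of_nonneg_of_nonpos (by linarith) (by linarith))
    rw [abs_sub_comm]
    rw [abs_sub_comm] at h h' hreflect
    exact abs_max_sub_min_le (abs_sub_comm (w x) (w y) ▸ hbound le_rfl) h' h hreflect
  · exact (abs_min_sub_min_le_max _ _ _ _).trans (max_le (hbound le_rfl) hreflect)

lemma polarization_eq_zero_of_le_norm (ht : 0 ≤ t) {R : ℝ} {w : E → ℝ} (hw : 0 ≤ w)
    (hR : ∀ x, R ≤ ‖x‖ → w x = 0) {x : E} (hx : R ≤ ‖x‖) : polarization n t w x = 0 := by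
  unfold polarization
  rw [hR x hx]
  split_ifs with hxt
  · have hle : ‖x‖ ≤ ‖hyperplaneReflection n t x‖ := by
      rw [← sq_le_sq₀ (norm_nonneg _) (norm_nonneg _), norm_hyperplaneReflection_sq hn]
      nlinarith
    rw [hR _ (hx.trans hle), max_self]
  · exact min_eq_left (hw _)

end Polarization

section IntegralLemmas

variable {α : Type*} [MeasurableSpace α] {μ : Measure α}

lemma two_mul_integral_eq_integral_add_comp {σ : α → α} (hσ : MeasurePreserving σ μ μ)
    {f : α → ℝ} (hf : Integrable f μ) : 2 * ∫ x, f x ∂μ = ∫ x, (f x + f (σ x)) ∂μ := by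
  have hcomp : ∫ x, f (σ x) ∂μ = ∫ x, f x ∂μ := by
    rw [← integral_map hσ.measurable.aemeasurable (by rw [hσ.map_eq]; exact hf.1), hσ.map_eq]
  have hfσ : Integrable (fun x => f (σ x)) μ := hσ.integrable_comp_of_integrable hf
  rw [integral_add hf hfσ, hcomp, two_mul]

lemma four_mul_lintegral_prod_eq_lintegral_add_comp [SFinite μ] {σ : α → α}
    (hσ : MeasurePreserving σ μ μ) {F : α × α → ENNReal} (hF : Measurable F) :
    4 * ∫⁻ z, F z ∂μ.prod μ =
      ∫⁻ z, (F z + F (σ z.1, σ z.2) + (F (z.1, σ z.2) + F (σ z.1, z.2))) ∂μ.prod μ := by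
  have hσm := hσ.measurable
  have hboth := (hσ.prod hσ).lintegral_comp hF
  have hsnd := ((MeasurePreserving.id μ).prod hσ).lintegral_comp hF
  have hfst := (hσ.prod (MeasurePreserving.id μ)).lintegral_comp hF
  simp only [Prod.map, id] at hboth hsnd hfst
  rw [lintegral_add_left (by fun_prop), lintegral_add_left hF, lintegral_add_left (by fun_prop),
    hboth, hsnd, hfst]
  ring

lemma tendsto_integral_of_abs_le_of_eq_zero_compl {s : Set α} (hs : MeasurableSet s)
    (hμs : μ s ≠ ⊤) {f : ℕ → α → ℝ} {g : α → ℝ} {C : ℝ}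
    (hf : ∀ n, AEStronglyMeasurable (f n) μ) (hC : ∀ n x, |f n x| ≤ C)
    (hzero : ∀ n, ∀ x ∉ s, f n x = 0) (hlim : ∀ x, Tendsto (f · x) atTop (𝓝 (g x))) :
    Tendsto (fun n => ∫ x, f n x ∂μ) atTop (𝓝 (∫ x, g x ∂μ)) := by
  refine tendsto_integral_of_dominated_convergence (s.indicator fun _ => C) hf
    ((integrable_indicator_iff hs).2 (integrableOn_const hμs)) (fun n => .of_forall fun x => ?_)
    (.of_forall hlim)
  by_cases hx : x ∈ s
  · rw [indicator_of_mem hx]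
    exact hC n x
  · rw [indicator_of_notMem hx, hzero n x hx, norm_zero]

end IntegralLemmas

lemma exists_subseq_tendsto_of_lipschitzWith {X : Type*} [MetricSpace X] [ProperSpace X]
    {w : ℕ → X → ℝ} {K : NNReal} {a b : ℝ} (hK : ∀ n, LipschitzWith K (w n))
    (hab : ∀ n x, w n x ∈ Icc a b) :
    ∃ (g : X → ℝ) (ψ : ℕ → ℕ), StrictMono ψ ∧
      ∀ x, Tendsto (fun n => w (ψ n) x) atTop (𝓝 (g x)) := by
  let S : Set C(X, ℝ) := {f | LipschitzWith K f ∧ ∀ x, f x ∈ Icc a b}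
  have himage : ContinuousMap.toFun '' S =
      {f : X → ℝ | LipschitzWith K f} ∩ Set.pi univ fun _ => Icc a b := by
    ext f
    constructor
    · rintro ⟨g, hg, rfl⟩
      exact ⟨hg.1, fun x _ => hg.2 x⟩
    · rintro ⟨hlip, hmem⟩
      exact ⟨⟨f, hlip.continuous⟩, ⟨hlip, fun x => hmem x trivial⟩, rfl⟩
  have hclosed : IsClosed {f : X → ℝ | LipschitzWith K f} := by
    simp only [lipschitzWith_iff_dist_le_mul, ofPred_forall]
    exact isClosed_iInter fun x => isClosed_iInter fun y =>
      isClosed_le (by fun_prop) (by fun_prop)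
  have hcompact : IsCompact S := by
    refine ArzelaAscoli.isCompact_of_equicontinuous S ?_ ?_
    · rw [himage]
      exact (isCompact_univ_pi fun _ => isCompact_Icc).inter_left hclosed
    · exact (LipschitzWith.uniformEquicontinuous (fun f : S => (f.1 : X → ℝ)) K
        fun f => f.2.1).equicontinuous
  obtain ⟨g, -, ψ, hψ, hlim⟩ := hcompact.isSeqCompact
    (x := fun n => (⟨w n, (hK n).continuous⟩ : C(X, ℝ))) fun n => ⟨hK n, hab n⟩
  exact ⟨g, ψ, hψ, fun x => ((continuous_eval_const (F := C(X, ℝ)) x).tendsto g).comp hlim⟩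

section NonlocalEnergy

/-- The integrand of `nonlocalEnergy`. -/
def nonlocalDensity {E : Type*} [NormedAddCommGroup E] (k φ : ℝ → ℝ) (w : E → ℝ)
    (z : E × E) : ℝ :=
  k ‖z.1 - z.2‖ * φ (w z.1 - w z.2)

lemma nonlocalDensity_nonneg {E : Type*} [NormedAddCommGroup E] {k φ : ℝ → ℝ} (hk : 0 ≤ k)
    (hφ : 0 ≤ φ) (w : E → ℝ) (z : E × E) : 0 ≤ nonlocalDensity k φ w z :=
  mul_nonneg (hk _) (hφ _)

variable {E : Type*} [NormedAddCommGroup E] [InnerProductSpace ℝ E]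

lemma nonlocalDensity_polarization_add_le {k φ : ℝ → ℝ} (hk : Antitone k)
    (hφ : ConvexOn ℝ univ φ) {n : E} (hn : ‖n‖ = 1) (t : ℝ) (w : E → ℝ) (x y : E) :
    let σ := hyperplaneReflection n t
    let e := nonlocalDensity k φ w
    let e' := nonlocalDensity k φ (polarization n t w)
    e' (x, y) + e' (σ x, σ y) + (e' (x, σ y) + e' (σ x, y)) ≤
      e (x, y) + e (σ x, σ y) + (e (x, σ y) + e (σ x, y)) := by
  intro σ
  simp only [nonlocalDensity, norm_hyperplaneReflection_sub hn,
    norm_hyperplaneReflection_sub_left hn, σ]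
  have same := fun h => hk (norm_sub_le_norm_sub_hyperplaneReflection hn t (x := x) (y := y) h)
  have opposite := fun h =>
    hk (norm_sub_hyperplaneReflection_le_norm_sub hn t (x := x) (y := y) h)
  rcases polarization_eq_max_or_min hn t w x with ⟨hx, hx₁, hx₂⟩ | ⟨hx, hx₁, hx₂⟩ <;>
  rcases polarization_eq_max_or_min hn t w y with ⟨hy, hy₁, hy₂⟩ | ⟨hy, hy₁, hy₂⟩ <;>
  rw [hx₁, hx₂, hy₁, hy₂]
  · linarith [convexOn_weighted_max_min_le hφ
      (same (mul_nonneg_of_nonpos_of_nonpos (by linarith) (by linarith))) (w x) (w (σ x)) (w y)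
      (w (σ y))]
  · have := convexOn_weighted_max_min_le hφ
      (opposite (mul_nonpos_of_nonpos_of_nonneg (by linarith) (by linarith))) (w x) (w (σ x))
      (w (σ y)) (w y)
    rw [max_comm (w (σ y)), min_comm (w (σ y))] at this
    linarith
  · have := convexOn_weighted_max_min_le hφ
      (opposite (mul_nonpos_of_nonneg_of_nonpos (by linarith) (by linarith))) (w x) (w (σ x))
      (w (σ y)) (w y)
    rw [max_comm (w (σ y)), min_comm (w (σ y))] at this
    linarith
  · linarith [convexOn_weighted_max_min_le hφ
      (same (mul_nonneg (by linarith) (by linarith))) (w x) (w (σ x)) (w y) (w (σ y))]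

variable [FiniteDimensional ℝ E] [MeasurableSpace E] [BorelSpace E]

/-- The interaction energy `∬ k(|x - y|) φ(w x - w y) dx dy`. For kernels concentrating at `0` it
approximates a gradient energy (Bourgain–Brezis–Mironescu), while, unlike gradient energies, its
monotonicity under polarization is a pointwise inequality. -/
noncomputable def nonlocalEnergy (k φ : ℝ → ℝ) (w : E → ℝ) : ENNReal :=
  ∫⁻ z : E × E, ENNReal.ofReal (nonlocalDensity k φ w z)

lemma measurable_nonlocalDensity {k φ : ℝ → ℝ} (hk : Measurable k) (hφ : Measurable φ)
    {w : E → ℝ} (hw : Measurable w) : Measurable (nonlocalDensity k φ w) := by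
  unfold nonlocalDensity
  fun_prop

lemma nonlocalEnergy_polarization_le {k φ : ℝ → ℝ} (hk : Antitone k) (hk₀ : 0 ≤ k)
    (hφ : ConvexOn ℝ univ φ) (hφ₀ : 0 ≤ φ) {n : E} (hn : ‖n‖ = 1) (t : ℝ) {w : E → ℝ}
    (hw : Measurable w) :
    nonlocalEnergy k φ (polarization n t w) ≤ nonlocalEnergy k φ w := by
  have hφm : Measurable φ :=
    (continuousOn_univ.1 (hφ.continuousOn isOpen_univ)).measurable
  have hσ := measurePreserving_hyperplaneReflection hn t
  have hsum (u : E → ℝ) (z₁ z₂ z₃ z₄ : E × E) :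
      ENNReal.ofReal (nonlocalDensity k φ u z₁) + ENNReal.ofReal (nonlocalDensity k φ u z₂) +
        (ENNReal.ofReal (nonlocalDensity k φ u z₃) + ENNReal.ofReal (nonlocalDensity k φ u z₄)) =
      ENNReal.ofReal (nonlocalDensity k φ u z₁ + nonlocalDensity k φ u z₂ +
        (nonlocalDensity k φ u z₃ + nonlocalDensity k φ u z₄)) := by
    have hpos := nonlocalDensity_nonneg hk₀ hφ₀ u
    rw [ENNReal.ofReal_add (add_nonneg (hpos _) (hpos _)) (add_nonneg (hpos _) (hpos _)),
      ENNReal.ofReal_add (hpos _) (hpos _), ENNReal.ofReal_add (hpos _) (hpos _)]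
  refine (ENNReal.mul_le_mul_iff_right (a := 4) (by norm_num) (by norm_num)).1 ?_
  simp only [nonlocalEnergy, Measure.volume_eq_prod]
  rw [four_mul_lintegral_prod_eq_lintegral_add_comp hσ
      (measurable_nonlocalDensity hk.measurable hφm hw).ennreal_ofReal,
    four_mul_lintegral_prod_eq_lintegral_add_comp hσ
      (measurable_nonlocalDensity hk.measurable hφm
        (measurable_polarization n t hw)).ennreal_ofReal]
  refine lintegral_mono fun z => ?_
  beta_reduce
  rw [hsum, hsum]
  exact ENNReal.ofReal_le_ofReal (nonlocalDensity_polarization_add_le hk hφ hn t w z.1 z.2)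

lemma nonlocalEnergy_le_of_tendsto {k φ : ℝ → ℝ} (hk : Measurable k) (hφ : Continuous φ)
    {f : ℕ → E → ℝ} {g : E → ℝ} (hf : ∀ n, Measurable (f n))
    (hlim : ∀ x, Tendsto (f · x) atTop (𝓝 (g x))) {C : ENNReal}
    (hC : ∀ n, nonlocalEnergy k φ (f n) ≤ C) : nonlocalEnergy k φ g ≤ C := by
  have hdensity : ∀ z, Tendsto (fun n => ENNReal.ofReal (nonlocalDensity k φ (f n) z)) atTop
      (𝓝 (ENNReal.ofReal (nonlocalDensity k φ g z))) := fun z =>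
    (ENNReal.continuous_ofReal.tendsto _).comp
      (((hφ.tendsto _).comp ((hlim z.1).sub (hlim z.2))).const_mul _)
  calc nonlocalEnergy k φ g
      = ∫⁻ z, liminf (fun n => ENNReal.ofReal (nonlocalDensity k φ (f n) z)) atTop :=
        lintegral_congr fun z => (hdensity z).liminf_eq.symm
    _ ≤ liminf (fun n => nonlocalEnergy k φ (f n)) atTop := lintegral_liminf_le fun n =>
        (measurable_nonlocalDensity hk hφ.measurable (hf n)).ennreal_ofReal
    _ ≤ C := (liminf_le_liminf (.of_forall hC)).trans_eq (by simp)

end NonlocalEnergy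

lemma hasCompactSupport_of_eq_zero_of_le_norm {E : Type*} [NormedAddCommGroup E] [ProperSpace E]
    {R : ℝ} {w : E → ℝ} (h : ∀ x, R ≤ ‖x‖ → w x = 0) : HasCompactSupport w := by
  refine HasCompactSupport.intro (isCompact_closedBall 0 R) fun x hx => h x ?_
  rw [mem_closedBall_zero_iff, not_le] at hx
  exact hx.le

/-- A function on a normed space that is a nonincreasing function of the norm: for such functions
`w x` depends only on `‖x‖`. -/
def RadiallyAntitone {E : Type*} [NormedAddCommGroup E] (w : E → ℝ) : Prop :=
  ∀ ⦃x y : E⦄, ‖x‖ ≤ ‖y‖ → w y ≤ w x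

section RadiallyAntitone

variable {E : Type*} [NormedAddCommGroup E]

lemma RadiallyAntitone.eq_of_norm_eq {w : E → ℝ} (hw : RadiallyAntitone w) {x y : E}
    (h : ‖x‖ = ‖y‖) : w x = w y :=
  le_antisymm (hw h.ge) (hw h.le)

lemma radiallyAntitone_of_norm_lt [NormedSpace ℝ E] {w : E → ℝ} (hw : Continuous w)
    (h : ∀ x y, ‖x‖ < ‖y‖ → w y ≤ w x) : RadiallyAntitone w := by
  intro x y hxy
  rcases eq_or_ne x 0 with rfl | hx
  · rcases eq_or_ne y 0 with rfl | hy
    · exact le_rfl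
    · exact h _ _ (by simpa using hy)
  have hlim : Tendsto (fun s : ℝ => w (s • x)) (𝓝[<] 1) (𝓝 (w x)) := by
    have : Continuous fun s : ℝ => w (s • x) := by fun_prop
    simpa using (this.tendsto 1).mono_left nhdsWithin_le_nhds
  refine ge_of_tendsto hlim ?_
  filter_upwards [Ioo_mem_nhdsLT zero_lt_one] with s hs
  refine h _ _ ?_
  rw [norm_smul, Real.norm_of_nonneg hs.1.le]
  exact (mul_lt_of_lt_one_left (norm_pos_iff.2 hx) hs.2).trans_le hxy

variable [InnerProductSpace ℝ E]

/-- The mirror is the perpendicular bisector of `x` and `y`. -/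
lemma exists_hyperplaneReflection_eq {x y : E} (hxy : ‖x‖ < ‖y‖) :
    ∃ (n : E) (t : ℝ), ‖n‖ = 1 ∧ 0 < t ∧ inner ℝ n x < t ∧ hyperplaneReflection n t x = y := by
  have hne : 0 < ‖y - x‖ := norm_pos_iff.2 (sub_ne_zero.2 fun h => hxy.ne (by rw [h]))
  set n : E := ‖y - x‖⁻¹ • (y - x) with hn
  have hdiff : inner ℝ n y - inner ℝ n x = ‖y - x‖ := by
    rw [← inner_sub_right, hn, real_inner_smul_left, real_inner_self_eq_norm_sq]
    field_simp
  have hsum : inner ℝ n y + inner ℝ n x = ‖y - x‖⁻¹ * (‖y‖ ^ 2 - ‖x‖ ^ 2) := by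
    rw [hn, real_inner_smul_left, real_inner_smul_left, ← mul_add, inner_sub_left, inner_sub_left,
      real_inner_self_eq_norm_sq, real_inner_self_eq_norm_sq, real_inner_comm x y]
    ring
  have hsum_pos : 0 < inner ℝ n y + inner ℝ n x := by
    rw [hsum]
    exact mul_pos (inv_pos.2 hne) (sub_pos.2 (by gcongr))
  refine ⟨n, (inner ℝ n y + inner ℝ n x) / 2, ?_, by positivity, by linarith, ?_⟩
  · rw [hn, norm_smul, norm_inv, norm_norm, inv_mul_cancel₀ hne.ne']
  · rw [hyperplaneReflection,
      show 2 * (inner ℝ n x - (inner ℝ n y + inner ℝ n x) / 2) = -‖y - x‖ by linarith, hn,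
      smul_smul, neg_mul, mul_inv_cancel₀ hne.ne']
    simp

lemma radiallyAntitone_of_hyperplaneReflection_le {w : E → ℝ} (hw : Continuous w)
    (h : ∀ (n : E) (t : ℝ), ‖n‖ = 1 → 0 < t → ∀ x, inner ℝ n x < t →
      w (hyperplaneReflection n t x) ≤ w x) : RadiallyAntitone w := by
  refine radiallyAntitone_of_norm_lt hw fun x y hxy => ?_
  obtain ⟨n, t, hn, ht, hx, rfl⟩ := exists_hyperplaneReflection_eq hxy
  exact h n t hn ht x hx

end RadiallyAntitone

section SecondMoment

variable {E : Type*} [NormedAddCommGroup E] [InnerProductSpace ℝ E]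

lemma hasCompactSupport_polarization {n : E} (hn : ‖n‖ = 1) (t : ℝ) {w : E → ℝ}
    (hw : HasCompactSupport w) : HasCompactSupport (polarization n t w) := by
  have hσ := hyperplaneReflection_involutive hn t
  refine HasCompactSupport.intro
    (hw.isCompact.union (hw.isCompact.image (continuous_hyperplaneReflection n t)))
    fun x hx => ?_
  have hx₁ : w x = 0 := image_eq_zero_of_notMem_tsupport fun h => hx (Or.inl h)
  have hx₂ : w (hyperplaneReflection n t x) = 0 :=
    image_eq_zero_of_notMem_tsupport fun h => hx (Or.inr ⟨_, h, hσ x⟩)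
  simp [polarization, hx₁, hx₂]

lemma sub_polarization_mul_norm_sq_add {n : E} (hn : ‖n‖ = 1) (t : ℝ) (w : E → ℝ) (x : E) :
    let σ := hyperplaneReflection n t
    (w x - polarization n t w x) * ‖x‖ ^ 2 + (w (σ x) - polarization n t w (σ x)) * ‖σ x‖ ^ 2 =
      4 * t * ((w x - polarization n t w x) * (inner ℝ n x - t)) := by
  intro σ
  have hsum := polarization_add_polarization_hyperplaneReflection hn t id w x
  simp only [id] at hsum
  rw [norm_hyperplaneReflection_sq hn]
  linear_combination -(‖x‖ ^ 2 - 4 * t * (inner ℝ n x - t)) * hsum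

lemma sub_polarization_mul_inner_sub_nonneg (n : E) (t : ℝ) (w : E → ℝ) (x : E) :
    0 ≤ (w x - polarization n t w x) * (inner ℝ n x - t) := by
  unfold polarization
  split_ifs with hx
  · exact mul_nonneg_of_nonpos_of_nonpos (sub_nonpos.2 (le_max_left _ _)) (sub_nonpos.2 hx)
  · exact mul_nonneg (sub_nonneg.2 (min_le_left _ _)) (sub_nonneg.2 (not_le.1 hx).le)

variable [FiniteDimensional ℝ E] [MeasurableSpace E] [BorelSpace E]

/-- The second moment `∫ w(x) |x|² dx`, whose minimizers over a polarization invariant class are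
radially nonincreasing. -/
noncomputable def secondMoment (w : E → ℝ) : ℝ := ∫ x, w x * ‖x‖ ^ 2

lemma secondMoment_polarization_lt {n : E} (hn : ‖n‖ = 1) {t : ℝ} (ht : 0 < t) {w : E → ℝ}
    {K : NNReal} (hK : LipschitzWith K w) (hw : HasCompactSupport w) {x : E}
    (hx : inner ℝ n x < t) (hlt : w x < w (hyperplaneReflection n t x)) :
    secondMoment (polarization n t w) < secondMoment w := by
  set σ := hyperplaneReflection n t
  set P := polarization n t w
  have hP : HasCompactSupport P := hasCompactSupport_polarization hn t hw
  have hwc := hK.continuous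
  have hPc := (lipschitzWith_polarization hn t hK).continuous
  have hσc : Continuous σ := continuous_hyperplaneReflection n t
  set f : E → ℝ := fun y => (w y - P y) * ‖y‖ ^ 2
  have hfs : HasCompactSupport f := HasCompactSupport.mul_right (hw.sub hP)
  have hf : Integrable f := Continuous.integrable_of_hasCompactSupport (by fun_prop) hfs
  have hdiff : ∫ y, f y = secondMoment w - secondMoment P := by
    simp only [f, sub_mul]
    exact integral_sub (Continuous.integrable_of_hasCompactSupport (by fun_prop) hw.mul_right)
      (Continuous.integrable_of_hasCompactSupport (by fun_prop) hP.mul_right)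
  have hfold : ∀ y, f y + f (σ y) = 4 * t * ((w y - P y) * (inner ℝ n y - t)) :=
    sub_polarization_mul_norm_sq_add hn t w
  have hnonneg : 0 ≤ fun y => f y + f (σ y) := fun y => by
    simp only [hfold]
    exact mul_nonneg (by positivity) (sub_polarization_mul_inner_sub_nonneg n t w y)
  have hne : f x + f (σ x) ≠ 0 := by
    have hPx : P x = w (σ x) := by
      simp only [P, polarization, if_pos hx.le]
      exact max_eq_right hlt.le
    rw [hfold, hPx]
    exact mul_ne_zero (by positivity) (mul_ne_zero (sub_neg.2 hlt).ne (sub_neg.2 hx).ne)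
  have hpos : 0 < ∫ y, (f y + f (σ y)) :=
    Continuous.integral_pos_of_hasCompactSupport_nonneg_nonzero (by fun_prop)
      (hfs.add (hfs.comp_isClosedEmbedding (isClosedEmbedding_hyperplaneReflection hn t)))
      hnonneg hne
  rw [← two_mul_integral_eq_integral_add_comp (measurePreserving_hyperplaneReflection hn t) hf,
    hdiff] at hpos
  linarith

end SecondMoment

section Rearrangement

variable {E : Type*} [NormedAddCommGroup E] [InnerProductSpace ℝ E] [FiniteDimensional ℝ E]
  [MeasurableSpace E] [BorelSpace E]

/-- `w` has the Lipschitz bound `K`, the range `[0, M]` and the support `{‖x‖ < R}` prescribed for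
`v`, is equimeasurable with `v`, and has no larger nonlocal energies. The class is
closed under polarization across hyperplanes missing the origin and under pointwise limits, so
that the Schwarz symmetrization of `v` can be found in it by minimization. -/
structure IsRearrangementOf (K : NNReal) (R M : ℝ) (v w : E → ℝ) : Prop where
  lipschitzWith : LipschitzWith K w
  mem_Icc : ∀ x, w x ∈ Icc 0 M
  eq_zero : ∀ x, R ≤ ‖x‖ → w x = 0
  integral_comp_eq : ∀ F : ℝ → ℝ, Continuous F → F 0 = 0 → ∫ x, F (w x) = ∫ x, F (v x)
  nonlocalEnergy_le : ∀ k φ : ℝ → ℝ, Antitone k → 0 ≤ k → ConvexOn ℝ univ φ → 0 ≤ φ →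
    nonlocalEnergy k φ w ≤ nonlocalEnergy k φ v

lemma integrable_comp_of_hasCompactSupport {F : ℝ → ℝ} (hF : Continuous F) (hF₀ : F 0 = 0)
    {w : E → ℝ} (hw : Continuous w) (hws : HasCompactSupport w) :
    Integrable fun x => F (w x) :=
  (hF.comp hw).integrable_of_hasCompactSupport (hws.comp_left hF₀)

lemma integral_comp_polarization {n : E} (hn : ‖n‖ = 1) (t : ℝ) {w : E → ℝ} {F : ℝ → ℝ}
    (hw : Integrable fun x => F (w x)) (hPw : Integrable fun x => F (polarization n t w x)) :
    ∫ x, F (polarization n t w x) = ∫ x, F (w x) := by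
  have hσ := measurePreserving_hyperplaneReflection hn t
  have hfold := two_mul_integral_eq_integral_add_comp hσ hPw
  simp_rw [polarization_add_polarization_hyperplaneReflection hn t F] at hfold
  linarith [two_mul_integral_eq_integral_add_comp hσ hw]

namespace IsRearrangementOf

variable {K : NNReal} {R M : ℝ} {v w : E → ℝ}

lemma continuous (h : IsRearrangementOf K R M v w) : Continuous w := h.lipschitzWith.continuous

lemma nonneg (h : IsRearrangementOf K R M v w) (x : E) : 0 ≤ w x := (h.mem_Icc x).1

lemma hasCompactSupport (h : IsRearrangementOf K R M v w) : HasCompactSupport w :=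
  hasCompactSupport_of_eq_zero_of_le_norm h.eq_zero

lemma polarization (h : IsRearrangementOf K R M v w) {n : E} (hn : ‖n‖ = 1) {t : ℝ}
    (ht : 0 ≤ t) : IsRearrangementOf K R M v (polarization n t w) where
  lipschitzWith := lipschitzWith_polarization hn t h.lipschitzWith
  mem_Icc := polarization_mem h.mem_Icc n t
  eq_zero := fun _ => polarization_eq_zero_of_le_norm hn t ht h.nonneg h.eq_zero
  integral_comp_eq := fun F hF hF₀ => by
    rw [← h.integral_comp_eq F hF hF₀]
    exact integral_comp_polarization hn t
      (integrable_comp_of_hasCompactSupport hF hF₀ h.continuous h.hasCompactSupport)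
      (integrable_comp_of_hasCompactSupport hF hF₀
        (lipschitzWith_polarization hn t h.lipschitzWith).continuous
        (hasCompactSupport_polarization hn t h.hasCompactSupport))
  nonlocalEnergy_le := fun k φ hk hk₀ hφ hφ₀ =>
    (nonlocalEnergy_polarization_le hk hk₀ hφ hφ₀ hn t h.continuous.measurable).trans
      (h.nonlocalEnergy_le k φ hk hk₀ hφ hφ₀)

lemma of_tendsto {f : ℕ → E → ℝ} (h : ∀ n, IsRearrangementOf K R M v (f n))
    (hlim : ∀ x, Tendsto (f · x) atTop (𝓝 (w x))) : IsRearrangementOf K R M v w where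
  lipschitzWith := LipschitzWith.of_dist_le_mul fun x y =>
    le_of_tendsto' ((hlim x).dist (hlim y)) fun n => (h n).lipschitzWith.dist_le_mul x y
  mem_Icc := fun x => isClosed_Icc.mem_of_tendsto (hlim x) (.of_forall fun n => (h n).mem_Icc x)
  eq_zero := fun x hx => tendsto_nhds_unique (hlim x) (by simp [fun n => (h n).eq_zero x hx])
  integral_comp_eq := fun F hF hF₀ => by
    obtain ⟨C, hC⟩ := isCompact_Icc.exists_bound_of_continuousOn (s := Icc 0 M) hF.continuousOn
    have htendsto := tendsto_integral_of_abs_le_of_eq_zero_compl (μ := volume)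
      (measurableSet_closedBall (x := (0 : E)) (ε := R)) measure_closedBall_lt_top.ne
      (fun n => (hF.comp (h n).continuous).aestronglyMeasurable)
      (fun n x => hC _ ((h n).mem_Icc x))
      (fun n x hx => by
        rw [mem_closedBall_zero_iff, not_le] at hx
        simp only [Function.comp, (h n).eq_zero x hx.le, hF₀])
      (fun x => (hF.tendsto _).comp (hlim x))
    exact tendsto_nhds_unique htendsto (by simp [fun n => (h n).integral_comp_eq F hF hF₀])
  nonlocalEnergy_le := fun k φ hk hk₀ hφ hφ₀ =>
    nonlocalEnergy_le_of_tendsto hk.measurable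
      (continuousOn_univ.1 (hφ.continuousOn isOpen_univ))
      (fun n => (h n).continuous.measurable) hlim
      fun n => (h n).nonlocalEnergy_le k φ hk hk₀ hφ hφ₀

lemma tendsto_secondMoment {f : ℕ → E → ℝ} (h : ∀ n, IsRearrangementOf K R M v (f n))
    (hlim : ∀ x, Tendsto (f · x) atTop (𝓝 (w x))) :
    Tendsto (fun n => secondMoment (f n)) atTop (𝓝 (secondMoment w)) := by
  have hM : 0 ≤ M := ((h 0).nonneg 0).trans ((h 0).mem_Icc 0).2
  refine tendsto_integral_of_abs_le_of_eq_zero_compl (C := M * R ^ 2)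
    (measurableSet_closedBall (x := (0 : E)) (ε := R)) measure_closedBall_lt_top.ne
    (fun n => ((h n).continuous.mul (by fun_prop)).aestronglyMeasurable)
    (fun n x => ?_) (fun n x hx => ?_) (fun x => (hlim x).mul_const _)
  · rw [abs_of_nonneg (mul_nonneg ((h n).nonneg x) (by positivity))]
    rcases le_or_gt R ‖x‖ with hx | hx
    · rw [(h n).eq_zero x hx, zero_mul]
      positivity
    · exact mul_le_mul ((h n).mem_Icc x).2 (by gcongr) (by positivity) hM
  · rw [mem_closedBall_zero_iff, not_le] at hx
    rw [(h n).eq_zero x hx.le, zero_mul]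

lemma exists_forall_secondMoment_le (hv : IsRearrangementOf K R M v v) :
    ∃ w, IsRearrangementOf K R M v w ∧
      ∀ u, IsRearrangementOf K R M v u → secondMoment w ≤ secondMoment u := by
  set S := secondMoment '' {w | IsRearrangementOf K R M v w}
  have hbdd : BddBelow S := by
    refine ⟨0, ?_⟩
    rintro _ ⟨w, hw, rfl⟩
    exact integral_nonneg fun x => mul_nonneg (hw.nonneg x) (by positivity)
  obtain ⟨m, -, hm, hmem⟩ := exists_seq_tendsto_sInf (⟨_, v, hv, rfl⟩ : S.Nonempty) hbdd
  choose f hf hfm using hmem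
  obtain ⟨g, ψ, hψ, hlim⟩ := exists_subseq_tendsto_of_lipschitzWith
    (fun n => (hf n).lipschitzWith) (fun n => (hf n).mem_Icc)
  refine ⟨g, of_tendsto (fun n => hf (ψ n)) hlim, fun u hu => ?_⟩
  have hg : secondMoment g = sInf S :=
    tendsto_nhds_unique (tendsto_secondMoment (fun n => hf (ψ n)) hlim)
      ((hm.comp hψ.tendsto_atTop).congr fun n => (hfm (ψ n)).symm)
  rw [hg]
  exact csInf_le hbdd ⟨u, hu, rfl⟩

theorem exists_radiallyAntitone (hv : IsRearrangementOf K R M v v) :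
    ∃ w, IsRearrangementOf K R M v w ∧ RadiallyAntitone w := by
  obtain ⟨w, hw, hmin⟩ := exists_forall_secondMoment_le hv
  refine ⟨w, hw, radiallyAntitone_of_hyperplaneReflection_le hw.continuous
    fun n t hn ht x hx => ?_⟩
  by_contra! hlt
  exact (hmin _ (hw.polarization hn ht.le)).not_gt
    (secondMoment_polarization_lt hn ht hw.lipschitzWith hw.hasCompactSupport hx hlt)

end IsRearrangementOf

end Rearrangement

section BallMoment

variable {E : Type*} [NormedAddCommGroup E] [InnerProductSpace ℝ E] [FiniteDimensional ℝ E]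
  [MeasurableSpace E] [BorelSpace E]

/-- The `p`-th absolute moment of the linear form `⟪a, ·⟫` over the unit ball. By rotation
invariance it is `‖a‖ ^ p` up to a constant, which recovers gradients from difference quotients. -/
noncomputable def ballMoment (p : ℝ) (a : E) : ENNReal :=
  ∫⁻ z in ball (0 : E) 1, ENNReal.ofReal (|inner ℝ a z| ^ p)

lemma measurable_ofReal_abs_inner_rpow (p : ℝ) (a : E) :
    Measurable fun z : E => ENNReal.ofReal (|inner ℝ a z| ^ p) :=
  ((by fun_prop : Measurable fun z : E => |inner ℝ a z|).pow_const p).ennreal_ofReal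

lemma ballMoment_smul (p c : ℝ) (a : E) :
    ballMoment p (c • a) = ENNReal.ofReal (|c| ^ p) * ballMoment p a := by
  rw [ballMoment, ballMoment, ← lintegral_const_mul _ (measurable_ofReal_abs_inner_rpow p a)]
  refine lintegral_congr fun z => ?_
  rw [← ENNReal.ofReal_mul (by positivity), real_inner_smul_left, abs_mul,
    mul_rpow (abs_nonneg _) (abs_nonneg _)]

lemma ballMoment_eq_of_norm_eq (p : ℝ) {a b : E} (h : ‖a‖ = ‖b‖) :
    ballMoment p a = ballMoment p b := by
  set g := (ℝ ∙ (a - b))ᗮ.reflection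
  have hg : g a = b := Submodule.reflection_sub h
  have hball : g ⁻¹' ball 0 1 = ball 0 1 := by simp [LinearIsometryEquiv.preimage_ball]
  calc ballMoment p a = ∫⁻ z in g ⁻¹' ball 0 1, ENNReal.ofReal (|inner ℝ b (g z)| ^ p) := by
        rw [hball, ballMoment]
        simp_rw [← hg, LinearIsometryEquiv.inner_map_map]
    _ = ballMoment p b := g.measurePreserving.setLIntegral_comp_preimage measurableSet_ball
        (measurable_ofReal_abs_inner_rpow p b)

lemma ballMoment_eq_mul (p : ℝ) {e : E} (he : ‖e‖ = 1) (a : E) :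
    ballMoment p a = ENNReal.ofReal (‖a‖ ^ p) * ballMoment p e := by
  rw [ballMoment_eq_of_norm_eq p (b := ‖a‖ • e) (by simp [norm_smul, he]), ballMoment_smul,
    abs_norm]

lemma ballMoment_ne_zero (p : ℝ) {a : E} (ha : a ≠ 0) : ballMoment p a ≠ 0 := by
  have hopen : IsOpen ({z : E | 0 < inner ℝ a z} ∩ ball 0 1) :=
    (isOpen_lt (by fun_prop) (by fun_prop)).inter isOpen_ball
  have hne : ({z : E | 0 < inner ℝ a z} ∩ ball 0 1).Nonempty := by
    have hpos : 0 < ‖a‖ := norm_pos_iff.2 ha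
    refine ⟨(2 * ‖a‖)⁻¹ • a, ?_, ?_⟩
    · rw [mem_ofPred_eq, real_inner_smul_right, real_inner_self_eq_norm_sq]
      positivity
    · rw [mem_ball_zero_iff, norm_smul, norm_of_nonneg (by positivity), mul_inv, mul_assoc,
        inv_mul_cancel₀ hpos.ne']
      norm_num
  refine (((setLIntegral_pos_iff (measurable_ofReal_abs_inner_rpow p a)).2 ?_)).ne'
  refine (hopen.measure_pos volume hne).trans_le (measure_mono ?_)
  gcongr
  rintro z (hz : 0 < inner ℝ a z)
  exact (ENNReal.ofReal_pos.2 (rpow_pos_of_pos (abs_pos.2 hz.ne') p)).ne'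

lemma ballMoment_ne_top {p : ℝ} (hp : 0 ≤ p) (a : E) : ballMoment p a ≠ ⊤ := by
  have hle : ballMoment p a ≤ ∫⁻ _ in ball (0 : E) 1, ENNReal.ofReal (‖a‖ ^ p) := by
    refine setLIntegral_mono' measurableSet_ball fun z hz => ?_
    rw [mem_ball_zero_iff] at hz
    gcongr
    exact (abs_real_inner_le_norm a z).trans (mul_le_of_le_one_right (norm_nonneg a) hz.le)
  refine ne_top_of_le_ne_top ?_ hle
  rw [setLIntegral_const]
  exact ENNReal.mul_ne_top ENNReal.ofReal_ne_top measure_ball_lt_top.ne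

end BallMoment

section DifferenceQuotientEnergy

lemma antitone_indicator_Iio_one (h : ℝ) : Antitone ((Iio h).indicator (1 : ℝ → ℝ)) := by
  intro a b hab
  by_cases hb : b ∈ Iio h
  · rw [indicator_of_mem hb, indicator_of_mem (show a ∈ Iio h from hab.trans_lt hb)]
    rfl
  · rw [indicator_of_notMem hb]
    exact indicator_nonneg (by simp) a

lemma lintegral_eq_mul_lintegral_add_smul {E : Type*} [NormedAddCommGroup E] [NormedSpace ℝ E]
    [FiniteDimensional ℝ E] [MeasurableSpace E] [BorelSpace E] (μ : Measure E)
    [μ.IsAddHaarMeasure] {h : ℝ} (hh : 0 < h) {F : E → ENNReal} (hF : Measurable F) (x : E) :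
    ∫⁻ y, F y ∂μ = ENNReal.ofReal (h ^ finrank ℝ E) * ∫⁻ z, F (x + h • z) ∂μ := by
  have hscale : ∫⁻ z, F (x + h • z) ∂μ =
      ENNReal.ofReal |(h ^ finrank ℝ E)⁻¹| * ∫⁻ y, F (x + y) ∂μ := by
    rw [← smul_eq_mul, ← lintegral_smul_measure, ← Measure.map_addHaar_smul μ hh.ne',
      lintegral_map (by fun_prop) (measurable_const_smul h)]
  rw [hscale, lintegral_add_left_eq_self F x, ← mul_assoc, ← ENNReal.ofReal_mul (by positivity),
    abs_of_pos (by positivity), mul_inv_cancel₀ (by positivity), ENNReal.ofReal_one, one_mul]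

lemma differenceQuotient_le_indicator {E : Type*} [NormedAddCommGroup E] [NormedSpace ℝ E]
    {p : ℝ} (hp : 0 < p) {K : NNReal} {R : ℝ} {w : E → ℝ} (hw : LipschitzWith K w)
    (hw₀ : ∀ x, R ≤ ‖x‖ → w x = 0) {h : ℝ} (hh : 0 < h) (hh₁ : h ≤ 1) {x z : E}
    (hz : z ∈ ball (0 : E) 1) :
    ENNReal.ofReal (|h⁻¹ * (w (x + h • z) - w x)| ^ p) ≤
      (closedBall 0 (R + 1)).indicator (fun _ => ENNReal.ofReal (K ^ p)) x := by
  rw [mem_ball_zero_iff] at hz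
  have hhz : ‖h • z‖ ≤ h := by
    rw [norm_smul, norm_of_nonneg hh.le]
    exact mul_le_of_le_one_right hh.le hz.le
  by_cases hx : x ∈ closedBall (0 : E) (R + 1)
  · rw [indicator_of_mem hx]
    gcongr
    have hlip := hw.norm_sub_le (x + h • z) x
    rw [add_sub_cancel_left, Real.norm_eq_abs] at hlip
    rw [abs_mul, abs_inv, abs_of_pos hh, inv_mul_le_iff₀ hh, mul_comm h]
    exact hlip.trans (by gcongr)
  · rw [mem_closedBall_zero_iff, not_le] at hx
    have := norm_sub_le_norm_add x (h • z)
    rw [hw₀ x (by linarith), hw₀ (x + h • z) (by linarith)]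
    simp [zero_rpow hp.ne']

variable {E : Type*} [NormedAddCommGroup E] [InnerProductSpace ℝ E] [FiniteDimensional ℝ E]
  [MeasurableSpace E] [BorelSpace E]

/-- The `p`-energy of the difference quotients of `w` of step `h` in the directions of the unit
ball. -/
noncomputable def differenceQuotientEnergy (p h : ℝ) (w : E → ℝ) : ENNReal :=
  ∫⁻ z, ENNReal.ofReal (|h⁻¹ * (w (z.1 + h • z.2) - w z.1)| ^ p)
    ∂((volume : Measure E).prod (volume.restrict (ball 0 1)))

lemma measurable_differenceQuotient (p h : ℝ) {w : E → ℝ} (hw : Measurable w) :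
    Measurable fun z : E × E => ENNReal.ofReal (|h⁻¹ * (w (z.1 + h • z.2) - w z.1)| ^ p) := by
  fun_prop

lemma lintegral_nonlocalDensity_indicator (p : ℝ) {h : ℝ} (hh : 0 < h) {w : E → ℝ}
    (hw : Measurable w) (x : E) :
    ∫⁻ y, ENNReal.ofReal (nonlocalDensity ((Iio h).indicator 1) (fun s => |s| ^ p) w (x, y)) =
      ENNReal.ofReal (h ^ finrank ℝ E * h ^ p) *
        ∫⁻ z in ball 0 1, ENNReal.ofReal (|h⁻¹ * (w (x + h • z) - w x)| ^ p) := by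
  have hmeas : Measurable fun y =>
      ENNReal.ofReal (nonlocalDensity ((Iio h).indicator 1) (fun s => |s| ^ p) w (x, y)) :=
    ((measurable_nonlocalDensity (antitone_indicator_Iio_one h).measurable (by fun_prop)
      hw).comp measurable_prodMk_left).ennreal_ofReal
  rw [lintegral_eq_mul_lintegral_add_smul volume hh hmeas x,
    ENNReal.ofReal_mul (by positivity), mul_assoc,
    ← lintegral_const_mul (ENNReal.ofReal (h ^ p)) (by fun_prop),
    ← lintegral_indicator measurableSet_ball]
  congr 2 with z
  simp only [nonlocalDensity, sub_add_cancel_left, norm_neg, norm_smul, norm_of_nonneg hh.le]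
  by_cases hz : z ∈ ball (0 : E) 1
  · rw [indicator_of_mem (by rw [mem_Iio]; nlinarith [mem_ball_zero_iff.1 hz]), indicator_of_mem hz,
      ← ENNReal.ofReal_mul (by positivity), ← mul_rpow hh.le (abs_nonneg _), abs_mul,
      abs_of_pos (inv_pos.2 hh), mul_inv_cancel_left₀ hh.ne', Pi.one_apply, one_mul, abs_sub_comm]
  · rw [mem_ball_zero_iff, not_lt] at hz
    rw [indicator_of_notMem (by rw [mem_Iio]; nlinarith), indicator_of_notMem (by simpa using hz)]
    simp

lemma nonlocalEnergy_indicator (p : ℝ) {h : ℝ} (hh : 0 < h) {w : E → ℝ} (hw : Measurable w) :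
    nonlocalEnergy ((Iio h).indicator 1) (fun s => |s| ^ p) w =
      ENNReal.ofReal (h ^ finrank ℝ E * h ^ p) * differenceQuotientEnergy p h w := by
  have hquot := measurable_differenceQuotient p h hw
  rw [nonlocalEnergy, differenceQuotientEnergy, Measure.volume_eq_prod,
    lintegral_prod _ (measurable_nonlocalDensity (antitone_indicator_Iio_one h).measurable
      (by fun_prop) hw).ennreal_ofReal.aemeasurable,
    lintegral_prod _ hquot.aemeasurable, ← lintegral_const_mul _ hquot.lintegral_prod_right']
  exact lintegral_congr fun x => lintegral_nonlocalDensity_indicator p hh hw x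

lemma tendsto_differenceQuotientEnergy {p : ℝ} (hp : 0 < p) {K : NNReal} {R : ℝ} {w : E → ℝ}
    (hw : LipschitzWith K w) (hw₀ : ∀ x, R ≤ ‖x‖ → w x = 0) :
    Tendsto (fun n : ℕ => differenceQuotientEnergy p (1 / ((n : ℝ) + 1)) w) atTop
      (𝓝 (∫⁻ z, ENNReal.ofReal (|fderiv ℝ w z.1 z.2| ^ p)
        ∂((volume : Measure E).prod (volume.restrict (ball 0 1))))) := by
  refine tendsto_lintegral_of_dominated_convergence
    (fun z => (closedBall (0 : E) (R + 1)).indicator (fun _ => ENNReal.ofReal (K ^ p)) z.1)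
    (fun n => measurable_differenceQuotient p _ hw.continuous.measurable) (fun n => ?_) ?_ ?_
  · filter_upwards [Measure.quasiMeasurePreserving_snd.ae
      (ae_restrict_mem measurableSet_ball)] with z hz
    exact differenceQuotient_le_indicator hp hw hw₀ (by positivity)
      (div_le_one_of_le₀ (by linarith [n.cast_nonneg (α := ℝ)]) (by positivity)) hz
  · rw [lintegral_prod _ (by fun_prop (disch := measurability))]
    simp_rw [lintegral_const]
    rw [lintegral_mul_const' _ _ (by simpa using measure_ball_lt_top.ne),
      lintegral_indicator_const measurableSet_closedBall, Measure.restrict_apply_univ]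
    exact ENNReal.mul_ne_top (ENNReal.mul_ne_top ENNReal.ofReal_ne_top
      measure_closedBall_lt_top.ne) measure_ball_lt_top.ne
  · filter_upwards [Measure.quasiMeasurePreserving_fst.ae hw.ae_differentiableAt] with z hz
    refine (ENNReal.continuous_ofReal.tendsto _).comp
      (Tendsto.rpow_const (Tendsto.abs ?_) (Or.inr hp.le))
    have hstep : Tendsto (fun n : ℕ => 1 / ((n : ℝ) + 1)) atTop (𝓝[≠] 0) :=
      tendsto_nhdsWithin_iff.2 ⟨tendsto_one_div_add_atTop_nhds_zero_nat,
        .of_forall fun n => (by positivity : (0 : ℝ) < 1 / (n + 1)).ne'⟩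
    exact (hz.hasFDerivAt.hasLineDerivAt z.2).tendsto_slope_zero.comp hstep

end DifferenceQuotientEnergy

section PolyaSzego

variable {E : Type*} [NormedAddCommGroup E] [InnerProductSpace ℝ E] [FiniteDimensional ℝ E]
  [MeasurableSpace E] [BorelSpace E]

lemma lintegral_abs_fderiv_apply_rpow (p : ℝ) {e : E} (he : ‖e‖ = 1) (w : E → ℝ) :
    ∫⁻ z, ENNReal.ofReal (|fderiv ℝ w z.1 z.2| ^ p)
        ∂((volume : Measure E).prod (volume.restrict (ball 0 1))) =
      (∫⁻ x, ENNReal.ofReal (‖fderiv ℝ w x‖ ^ p)) * ballMoment p e := by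
  have hmeas : Measurable fun z : E × E => fderiv ℝ w z.1 z.2 :=
    (isBoundedBilinearMap_apply (𝕜 := ℝ) (E := E) (F := ℝ)).continuous.measurable.comp
      (((measurable_fderiv ℝ w).comp measurable_fst).prodMk measurable_snd)
  rw [lintegral_prod _ (by fun_prop),
    ← lintegral_mul_const _ ((measurable_fderiv ℝ w).norm.pow_const _).ennreal_ofReal]
  refine lintegral_congr fun x => ?_
  rw [← (InnerProductSpace.toDual ℝ E).symm.norm_map (fderiv ℝ w x), ← ballMoment_eq_mul p he,
    ballMoment]
  simp

/-- The kernels `1_{‖x - y‖ < h}`, rescaled as `h → 0`, recover the gradient energy from the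
nonlocal energies. -/
theorem IsRearrangementOf.lintegral_norm_fderiv_rpow_le {K : NNReal} {R M : ℝ} {v w : E → ℝ}
    (h : IsRearrangementOf K R M v w) (hv : IsRearrangementOf K R M v v) {p : ℝ} (hp : 1 ≤ p) :
    ∫⁻ x, ENNReal.ofReal (‖fderiv ℝ w x‖ ^ p) ≤ ∫⁻ x, ENNReal.ofReal (‖fderiv ℝ v x‖ ^ p) := by
  rcases subsingleton_or_nontrivial E with _ | _
  · exact (lintegral_congr fun x => by rw [Subsingleton.elim (fderiv ℝ w x)]).le
  obtain ⟨e, he⟩ := exists_norm_eq E zero_le_one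
  have hp₀ : 0 < p := by linarith
  have hle : ∀ n : ℕ, differenceQuotientEnergy p (1 / ((n : ℝ) + 1)) w ≤
      differenceQuotientEnergy p (1 / ((n : ℝ) + 1)) v := fun n => by
    have hpos : (0 : ℝ) < 1 / (n + 1) := by positivity
    have henergy := h.nonlocalEnergy_le ((Iio (1 / ((n : ℝ) + 1))).indicator 1)
      (fun s => |s| ^ p) (antitone_indicator_Iio_one _) (indicator_nonneg (by simp))
      (convexOn_abs_rpow hp) (fun s => by positivity)
    rwa [nonlocalEnergy_indicator p hpos h.continuous.measurable,
      nonlocalEnergy_indicator p hpos hv.continuous.measurable,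
      ENNReal.mul_le_mul_iff_right (ENNReal.ofReal_pos.2 (by positivity)).ne'
        ENNReal.ofReal_ne_top] at henergy
  have hlim := le_of_tendsto_of_tendsto'
    (tendsto_differenceQuotientEnergy hp₀ h.lipschitzWith h.eq_zero)
    (tendsto_differenceQuotientEnergy hp₀ hv.lipschitzWith hv.eq_zero) hle
  rwa [lintegral_abs_fderiv_apply_rpow p he, lintegral_abs_fderiv_apply_rpow p he,
    ENNReal.mul_le_mul_iff_left
      (ballMoment_ne_zero p (norm_ne_zero_iff.1 (by rw [he]; exact one_ne_zero)))
      (ballMoment_ne_top hp₀.le e)] at hlim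

end PolyaSzego

section FDerivBounds

variable {E : Type*} [NormedAddCommGroup E] [NormedSpace ℝ E]

lemma norm_fderiv_le_of_abs_sub_le {g w : E → ℝ} {x : E} (h : ∀ y, |g y - g x| ≤ |w y - w x|)
    (hw : DifferentiableAt ℝ w x) : ‖fderiv ℝ g x‖ ≤ ‖fderiv ℝ w x‖ := by
  by_cases hg : DifferentiableAt ℝ g x
  · have hslope (f : E → ℝ) (hf : DifferentiableAt ℝ f x) (z : E) :
        Tendsto (fun t : ℝ => |t⁻¹ * (f (x + t • z) - f x)|) (𝓝[≠] 0) (𝓝 |fderiv ℝ f x z|) := by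
      simpa using (hf.hasFDerivAt.hasLineDerivAt z).tendsto_slope_zero.abs
    refine ContinuousLinearMap.opNorm_le_bound _ (norm_nonneg _) fun z => ?_
    refine le_trans ?_ ((fderiv ℝ w x).le_opNorm z)
    refine le_of_tendsto_of_tendsto' (hslope g hg z) (hslope w hw z) fun t => ?_
    rw [abs_mul, abs_mul]
    exact mul_le_mul_of_nonneg_left (h _) (abs_nonneg _)
  · simp [fderiv_zero_of_not_differentiableAt hg]

variable {R : ℝ} {w : E → ℝ}

lemma fderiv_eq_zero_of_lt_norm (h : ∀ x, R ≤ ‖x‖ → w x = 0) {x : E} (hx : R < ‖x‖) :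
    fderiv ℝ w x = 0 := by
  have hw : w =ᶠ[𝓝 x] fun _ => 0 := by
    filter_upwards [continuous_norm.continuousAt.eventually_const_lt hx] with y hy using h y hy.le
  rw [hw.fderiv_eq, fderiv_fun_const, Pi.zero_apply]

variable {p : ℝ} {K : NNReal}

lemma norm_fderiv_rpow_le_indicator (hp : 0 < p) (hw : LipschitzWith K w)
    (h : ∀ x, R ≤ ‖x‖ → w x = 0) (x : E) :
    ‖‖fderiv ℝ w x‖ ^ p‖ ≤ (closedBall (0 : E) R).indicator (fun _ => (K : ℝ) ^ p) x := by
  by_cases hx : x ∈ closedBall (0 : E) R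
  · rw [indicator_of_mem hx, Real.norm_of_nonneg (by positivity)]
    exact rpow_le_rpow (norm_nonneg _) (norm_fderiv_le_of_lipschitz ℝ hw) hp.le
  · rw [indicator_of_notMem hx, fderiv_eq_zero_of_lt_norm h (by simpa using hx)]
    simp [zero_rpow hp.ne']

variable [FiniteDimensional ℝ E] [MeasurableSpace E] [BorelSpace E] {μ : Measure E}
  [IsFiniteMeasureOnCompacts μ]

lemma integrable_norm_fderiv_rpow (hp : 0 < p) (hw : LipschitzWith K w)
    (h : ∀ x, R ≤ ‖x‖ → w x = 0) : Integrable (fun x => ‖fderiv ℝ w x‖ ^ p) μ :=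
  ((integrable_indicator_iff measurableSet_closedBall).2
    (integrableOn_const measure_closedBall_lt_top.ne)).mono'
    ((measurable_fderiv ℝ w).norm.pow_const _).aestronglyMeasurable
    (Eventually.of_forall (norm_fderiv_rpow_le_indicator hp hw h))

end FDerivBounds

section Mollification

section Bump

variable (E : Type*) [NormedAddCommGroup E] {δ : ℝ} (hδ : 0 < δ)

/-- The bump functions of inner radius `δ / (2 (n + 1))` and outer radius `δ / (n + 1)`, used as
mollifiers. -/
noncomputable def shrinkingBump (n : ℕ) : ContDiffBump (0 : E) where
  rIn := δ / 2 / (n + 1)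
  rOut := δ / (n + 1)
  rIn_pos := by positivity
  rIn_lt_rOut := by gcongr; exact half_lt_self hδ

lemma rOut_shrinkingBump (n : ℕ) :
    (shrinkingBump E hδ n).rOut = 2 * (shrinkingBump E hδ n).rIn := by
  simp only [shrinkingBump]
  ring

lemma rOut_shrinkingBump_le (n : ℕ) : (shrinkingBump E hδ n).rOut ≤ δ :=
  div_le_self hδ.le (le_add_of_nonneg_left n.cast_nonneg)

lemma tendsto_rOut_shrinkingBump :
    Tendsto (fun n => (shrinkingBump E hδ n).rOut) atTop (𝓝 0) := by
  simpa [shrinkingBump, div_eq_mul_inv] using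
    (tendsto_one_div_add_atTop_nhds_zero_nat (𝕜 := ℝ)).const_mul δ

end Bump

open scoped Convolution

variable {E : Type*} [NormedAddCommGroup E] [NormedSpace ℝ E] [FiniteDimensional ℝ E]
  [MeasurableSpace E] [BorelSpace E] {μ : Measure E} [μ.IsAddHaarMeasure]
  {K : NNReal} {g : E → ℝ}

lemma fderiv_convolution_of_lipschitzWith {f : E → ℝ} (hf : Continuous f)
    (hfs : HasCompactSupport f) (hg : LipschitzWith K g) (x : E) :
    fderiv ℝ (f ⋆[ContinuousLinearMap.lsmul ℝ ℝ, μ] g) x =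
      (f ⋆[ContinuousLinearMap.lsmul ℝ ℝ, μ] fderiv ℝ g) x := by
  have hgc := hg.continuous
  have hdiff : ∀ᵐ t ∂μ, HasFDerivAt (fun y => f t • g (y - t)) (f t • fderiv ℝ g (x - t)) x := by
    filter_upwards [(Measure.measurePreserving_sub_left μ x).quasiMeasurePreserving.ae
      hg.ae_differentiableAt] with t ht
    have hsub := ht.hasFDerivAt.comp x ((hasFDerivAt_id x).sub_const t)
    rw [ContinuousLinearMap.comp_id] at hsub
    exact hsub.fun_const_smul _
  have hlip (t : E) : LipschitzOnWith (Real.nnabs (‖f t‖ * K)) (fun y => f t • g (y - t)) univ := by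
    refine LipschitzOnWith.of_dist_le_mul fun y _ z _ => ?_
    have hK := hg.dist_le_mul (y - t) (z - t)
    rw [dist_sub_right] at hK
    rw [dist_smul₀, coe_nnabs, abs_of_nonneg (by positivity), mul_assoc]
    exact mul_le_mul_of_nonneg_left hK (norm_nonneg _)
  exact (hasFDerivAt_integral_of_dominated_loc_of_lip (𝕜 := ℝ) univ_mem
    (Eventually.of_forall fun y =>
      (by fun_prop : Continuous fun t => f t • g (y - t)).aestronglyMeasurable)
    (Continuous.integrable_of_hasCompactSupport (by fun_prop) hfs.smul_right)
    (hf.measurable.smul ((measurable_fderiv ℝ g).comp (by fun_prop))).aestronglyMeasurable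
    (Eventually.of_forall hlip)
    ((hf.integrable_of_hasCompactSupport hfs).norm.mul_const _) hdiff).2.fderiv

lemma lipschitzWith_normed_convolution (φ : ContDiffBump (0 : E)) (hg : LipschitzWith K g) :
    LipschitzWith K (φ.normed μ ⋆[ContinuousLinearMap.lsmul ℝ ℝ, μ] g) := by
  have hφ := φ.continuous_normed (μ := μ)
  have hgc := hg.continuous
  have hint (x : E) : Integrable (fun t => φ.normed μ t • g (x - t)) μ :=
    Continuous.integrable_of_hasCompactSupport (by fun_prop) φ.hasCompactSupport_normed.smul_right
  refine LipschitzWith.of_dist_le_mul fun x y => ?_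
  calc
    _ = ‖∫ t, φ.normed μ t • (g (x - t) - g (y - t)) ∂μ‖ := by
        simp only [Real.dist_eq, convolution, ContinuousLinearMap.lsmul_apply, smul_sub,
          integral_sub (hint x) (hint y), Real.norm_eq_abs]
    _ ≤ ∫ t, φ.normed μ t * (K * dist x y) ∂μ := by
        refine norm_integral_le_of_norm_le (φ.integrable_normed.mul_const _)
          (Eventually.of_forall fun t => ?_)
        rw [norm_smul, Real.norm_of_nonneg (φ.nonneg_normed _), ← dist_eq_norm]
        refine mul_le_mul_of_nonneg_left ?_ (φ.nonneg_normed _)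
        simpa only [dist_sub_right] using hg.dist_le_mul (x - t) (y - t)
    _ = K * dist x y := by rw [integral_mul_const, φ.integral_normed, one_mul]

lemma normed_convolution_eq_zero (φ : ContDiffBump (0 : E)) {r : ℝ}
    (h : ∀ x, r ≤ ‖x‖ → g x = 0) {x : E} (hx : r + φ.rOut ≤ ‖x‖) :
    (φ.normed μ ⋆[ContinuousLinearMap.lsmul ℝ ℝ, μ] g) x = 0 := by
  refine integral_eq_zero_of_ae (Eventually.of_forall fun t => ?_)
  change φ.normed μ t • g (x - t) = 0
  by_cases ht : t ∈ Function.support (φ.normed μ)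
  · rw [φ.support_normed_eq, mem_ball_zero_iff] at ht
    rw [h, smul_zero]
    linarith [norm_sub_norm_le x t]
  · rw [Function.notMem_support.1 ht, zero_smul]

/-- The mollifications of `g` at scale at most `δ`; they converge to `g` as `n → ∞`. -/
noncomputable def mollification (μ : Measure E) {δ : ℝ} (hδ : 0 < δ) (n : ℕ) (g : E → ℝ) : E → ℝ :=
  (shrinkingBump E hδ n).normed μ ⋆[ContinuousLinearMap.lsmul ℝ ℝ, μ] g

namespace mollification

variable {δ r : ℝ} (hδ : 0 < δ)

lemma lipschitzWith (hg : LipschitzWith K g) (n : ℕ) : LipschitzWith K (mollification μ hδ n g) :=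
  lipschitzWith_normed_convolution _ hg

lemma contDiff (hg : Continuous g) (n : ℕ) : ContDiff ℝ (⊤ : ℕ∞) (mollification μ hδ n g) :=
  (shrinkingBump E hδ n).hasCompactSupport_normed.contDiff_convolution_left _
    (shrinkingBump E hδ n).contDiff_normed hg.locallyIntegrable

lemma eq_zero (h : ∀ x, r ≤ ‖x‖ → g x = 0) (n : ℕ) (x : E) (hx : r + δ ≤ ‖x‖) :
    mollification μ hδ n g x = 0 :=
  normed_convolution_eq_zero _ h (by linarith [rOut_shrinkingBump_le E hδ n])

lemma abs_sub_le (hg : LipschitzWith K g) (n : ℕ) (x : E) :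
    |mollification μ hδ n g x - g x| ≤ K * δ :=
  (shrinkingBump E hδ n).dist_normed_convolution_le hg.continuous.aestronglyMeasurable
    fun y hy => (hg.dist_le_mul y x).trans <| mul_le_mul_of_nonneg_left
      ((mem_ball.1 hy).le.trans (rOut_shrinkingBump_le E hδ n)) K.2

lemma tendsto_apply (hg : Continuous g) (x : E) :
    Tendsto (fun n => mollification μ hδ n g x) atTop (𝓝 (g x)) :=
  ContDiffBump.convolution_tendsto_right_of_continuous (tendsto_rOut_shrinkingBump E hδ) hg x

lemma tendsto_integral_abs_rpow {q : ℝ} (hq : 0 < q) (hg : LipschitzWith K g)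
    (h : ∀ x, r ≤ ‖x‖ → g x = 0) :
    Tendsto (fun n => ∫ x, |mollification μ hδ n g x| ^ q ∂μ) atTop (𝓝 (∫ x, |g x| ^ q ∂μ)) := by
  obtain ⟨M, hM⟩ :=
    (hasCompactSupport_of_eq_zero_of_le_norm h).exists_bound_of_continuous hg.continuous
  refine tendsto_integral_of_abs_le_of_eq_zero_compl (C := (M + K * δ) ^ q)
    (measurableSet_closedBall (x := (0 : E)) (ε := r + δ)) measure_closedBall_lt_top.ne
    (fun n => ?_) (fun n x => ?_) (fun n x hx => ?_) (fun x => ?_)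
  · exact ((lipschitzWith hδ hg n).continuous.abs.rpow_const
      fun _ => Or.inr hq.le).aestronglyMeasurable
  · rw [abs_of_nonneg (by positivity)]
    refine rpow_le_rpow (abs_nonneg _) ?_ hq.le
    linarith [hM x, Real.norm_eq_abs (g x), abs_sub_le (μ := μ) hδ hg n x,
      abs_sub_abs_le_abs_sub (mollification μ hδ n g x) (g x)]
  · rw [mem_closedBall_zero_iff, not_le] at hx
    rw [eq_zero hδ h n x hx.le, abs_zero, zero_rpow hq.ne']
  · exact (tendsto_apply hδ hg.continuous x).abs.rpow_const (Or.inr hq.le)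

lemma ae_tendsto_fderiv (hg : LipschitzWith K g) (h : ∀ x, r ≤ ‖x‖ → g x = 0) :
    ∀ᵐ x ∂μ, Tendsto (fun n => fderiv ℝ (mollification μ hδ n g) x) atTop (𝓝 (fderiv ℝ g x)) := by
  have hint : Integrable (fderiv ℝ g) μ := by
    rw [← integrable_norm_iff (measurable_fderiv ℝ g).aestronglyMeasurable]
    simpa only [rpow_one] using integrable_norm_fderiv_rpow (μ := μ) one_pos hg h
  filter_upwards [ContDiffBump.ae_convolution_tendsto_right_of_locallyIntegrable (K := 2)
    (tendsto_rOut_shrinkingBump E hδ)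
    (Eventually.of_forall fun n => (rOut_shrinkingBump E hδ n).le)
    hint.locallyIntegrable] with x hx
  exact hx.congr fun n => (fderiv_convolution_of_lipschitzWith
    (ContDiffBump.continuous_normed _) (ContDiffBump.hasCompactSupport_normed _) hg x).symm

lemma tendsto_integral_norm_fderiv_rpow {p : ℝ} (hp : 0 < p) (hg : LipschitzWith K g)
    (h : ∀ x, r ≤ ‖x‖ → g x = 0) :
    Tendsto (fun n => ∫ x, ‖fderiv ℝ (mollification μ hδ n g) x‖ ^ p ∂μ) atTop
      (𝓝 (∫ x, ‖fderiv ℝ g x‖ ^ p ∂μ)) := by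
  refine tendsto_integral_of_dominated_convergence
    (fun x => (closedBall (0 : E) (r + δ)).indicator (fun _ => (K : ℝ) ^ p) x)
    (fun n => ((measurable_fderiv ℝ _).norm.pow_const _).aestronglyMeasurable)
    ((integrable_indicator_iff measurableSet_closedBall).2
      (integrableOn_const measure_closedBall_lt_top.ne))
    (fun n => Eventually.of_forall
      (norm_fderiv_rpow_le_indicator hp (lipschitzWith hδ hg n) (eq_zero hδ h n))) ?_
  filter_upwards [ae_tendsto_fderiv hδ hg h] with x hx
  exact hx.norm.rpow_const (Or.inr hp.le)

end mollification

end Mollification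

section DirichletEigenvalue

variable {N : ℕ} {p q : ℝ} {Ω : Set (EuclideanSpace ℝ (Fin N))}
  {v w : EuclideanSpace ℝ (Fin N) → ℝ}

/-- The competitors in the variational definition of `lambdaPQ p q Ω`. -/
structure IsDirichletTestFunction (Ω : Set (EuclideanSpace ℝ (Fin N)))
    (v : EuclideanSpace ℝ (Fin N) → ℝ) : Prop where
  contDiff : ContDiff ℝ (⊤ : ℕ∞) v
  hasCompactSupport : HasCompactSupport v
  tsupport_subset : tsupport v ⊆ Ω
  exists_ne_zero : ∃ x ∈ Ω, v x ≠ 0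

lemma lambdaPQ_eq_sInf_image (p q : ℝ) (Ω : Set (EuclideanSpace ℝ (Fin N))) :
    lambdaPQ p q Ω = sInf (rayleighQuot p q Ω '' {v | IsDirichletTestFunction Ω v}) := by
  unfold lambdaPQ
  congr 1
  ext R
  constructor
  · rintro ⟨v, h₁, h₂, h₃, h₄, rfl⟩
    exact ⟨v, ⟨h₁, h₂, h₃, h₄⟩, rfl⟩
  · rintro ⟨v, ⟨h₁, h₂, h₃, h₄⟩, rfl⟩
    exact ⟨v, h₁, h₂, h₃, h₄, rfl⟩

lemma rayleighQuot_nonneg (p q : ℝ) (Ω : Set (EuclideanSpace ℝ (Fin N)))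
    (v : EuclideanSpace ℝ (Fin N) → ℝ) : 0 ≤ rayleighQuot p q Ω v :=
  div_nonneg (integral_nonneg fun _ => by positivity)
    (rpow_nonneg (integral_nonneg fun _ => by positivity) _)

lemma lambdaPQ_nonneg (p q : ℝ) (Ω : Set (EuclideanSpace ℝ (Fin N))) : 0 ≤ lambdaPQ p q Ω := by
  rw [lambdaPQ_eq_sInf_image]
  refine Real.sInf_nonneg ?_
  rintro _ ⟨v, -, rfl⟩
  exact rayleighQuot_nonneg p q Ω v

lemma lambdaPQ_le_rayleighQuot (p q : ℝ) (hv : IsDirichletTestFunction Ω v) :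
    lambdaPQ p q Ω ≤ rayleighQuot p q Ω v := by
  rw [lambdaPQ_eq_sInf_image]
  refine csInf_le ⟨0, ?_⟩ ⟨v, hv, rfl⟩
  rintro _ ⟨u, -, rfl⟩
  exact rayleighQuot_nonneg p q Ω u

lemma exists_isDirichletTestFunction (hΩ : IsOpen Ω) (hne : Ω.Nonempty) :
    {v | IsDirichletTestFunction Ω v}.Nonempty := by
  obtain ⟨x, hx⟩ := hne
  obtain ⟨v, hsupp, hcompact, hsmooth, -, hx₁⟩ :=
    exists_contDiff_tsupport_subset (n := (⊤ : ℕ∞)) (hΩ.mem_nhds hx)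
  exact ⟨v, hsmooth, hcompact, hsupp, x, hx, by rw [hx₁]; exact one_ne_zero⟩

lemma le_lambdaPQ {a : ℝ} (hΩ : IsOpen Ω) (hne : Ω.Nonempty)
    (h : ∀ v, IsDirichletTestFunction Ω v → a ≤ rayleighQuot p q Ω v) : a ≤ lambdaPQ p q Ω := by
  rw [lambdaPQ_eq_sInf_image]
  refine le_csInf ((exists_isDirichletTestFunction hΩ hne).image _) ?_
  rintro _ ⟨v, hv, rfl⟩
  exact h v hv

lemma IsDirichletTestFunction.rayleighQuot_eq (hv : IsDirichletTestFunction Ω v) (hp : p ≠ 0)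
    (hq : q ≠ 0) :
    rayleighQuot p q Ω v = (∫ x, ‖fderiv ℝ v x‖ ^ p) / (∫ x, |v x| ^ q) ^ (p / q) := by
  rw [rayleighQuot, setIntegral_eq_integral_of_forall_compl_eq_zero,
    setIntegral_eq_integral_of_forall_compl_eq_zero] <;> intro x hx
  · rw [image_eq_zero_of_notMem_tsupport fun hxs => hx (hv.tsupport_subset hxs), abs_zero,
      zero_rpow hq]
  · rw [fderiv_of_notMem_tsupport ℝ fun hxs => hx (hv.tsupport_subset hxs), norm_zero,
      zero_rpow hp]

lemma IsDirichletTestFunction.integral_abs_rpow_pos (hv : IsDirichletTestFunction Ω v)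
    (hq : 0 < q) : 0 < ∫ x, |v x| ^ q := by
  obtain ⟨x, -, hx⟩ := hv.exists_ne_zero
  have hsupp : HasCompactSupport fun x => |v x| ^ q :=
    hv.hasCompactSupport.comp_left (g := fun t => |t| ^ q) (by simp [zero_rpow hq.ne'])
  exact Continuous.integral_pos_of_hasCompactSupport_nonneg_nonzero
    (hv.contDiff.continuous.abs.rpow_const fun _ => Or.inr hq.le) hsupp (fun _ => by positivity)
    (rpow_pos_of_pos (abs_pos.2 hx) q).ne'

lemma lambdaPQ_mul_le_of_contDiff (hp : 0 < p) (hq : 0 < q) (hv : ContDiff ℝ (⊤ : ℕ∞) v)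
    (hvs : HasCompactSupport v) (hvΩ : tsupport v ⊆ Ω) :
    lambdaPQ p q Ω * (∫ x, |v x| ^ q) ^ (p / q) ≤ ∫ x, ‖fderiv ℝ v x‖ ^ p := by
  by_cases h : ∃ x ∈ Ω, v x ≠ 0
  · have htest : IsDirichletTestFunction Ω v := ⟨hv, hvs, hvΩ, h⟩
    rw [← le_div_iff₀ (rpow_pos_of_pos (htest.integral_abs_rpow_pos hq) _),
      ← htest.rayleighQuot_eq hp.ne' hq.ne']
    exact lambdaPQ_le_rayleighQuot p q htest
  · push Not at h
    have hv₀ (x) : v x = 0 := by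
      by_cases hx : x ∈ Ω
      · exact h x hx
      · exact image_eq_zero_of_notMem_tsupport fun hxs => hx (hvΩ hxs)
    have hint : ∫ x, |v x| ^ q = 0 := by simp [hv₀, zero_rpow hq.ne']
    rw [hint, zero_rpow (div_pos hp hq).ne', mul_zero]
    exact integral_nonneg fun x => by positivity

end DirichletEigenvalue

section Scaling

variable {N : ℕ} {p q : ℝ} {Ω : Set (EuclideanSpace ℝ (Fin N))} {k : ℝ}

lemma setIntegral_preimage_add_smul (hk : 0 < k) (c : EuclideanSpace ℝ (Fin N))
    (hΩ : MeasurableSet Ω) (f : EuclideanSpace ℝ (Fin N) → ℝ) :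
    ∫ x in (fun y => c + k • y) ⁻¹' Ω, f (c + k • x) = k ^ (-(N : ℝ)) * ∫ x in Ω, f x := by
  have hT : Measurable fun y : EuclideanSpace ℝ (Fin N) => c + k • y := by fun_prop
  rw [← integral_indicator (hT hΩ), ← integral_indicator hΩ]
  change ∫ x, Ω.indicator f (c + k • x) = _
  rw [Measure.integral_comp_smul volume (fun x => Ω.indicator f (c + x)) k,
    integral_add_left_eq_self, smul_eq_mul, rpow_neg hk.le, rpow_natCast,
    abs_of_pos (by positivity), finrank_euclideanSpace_fin]

lemma fderiv_comp_add_smul {E : Type*} [NormedAddCommGroup E] [NormedSpace ℝ E] (f : E → ℝ)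
    (c : E) (k : ℝ) (x : E) :
    fderiv ℝ (fun x => f (c + k • x)) x = k • fderiv ℝ f (c + k • x) := by
  have h := fderiv_comp_smul (𝕜 := ℝ) (f := fun y => f (c + y)) (x := x) k
  rwa [fderiv_comp_add_left] at h

lemma rayleighQuot_comp_add_smul (p q : ℝ) (hk : 0 < k) (c : EuclideanSpace ℝ (Fin N))
    (hΩ : MeasurableSet Ω) (v : EuclideanSpace ℝ (Fin N) → ℝ) :
    rayleighQuot p q ((fun y => c + k • y) ⁻¹' Ω) (fun y => v (c + k • y)) =
      rayleighQuot p q Ω v * k ^ (p + N * p / q - N) := by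
  have hexp : k ^ (p + N * p / q - N) = k ^ p * k ^ (-(N : ℝ)) / k ^ (-(N : ℝ) * (p / q)) := by
    rw [← rpow_add hk, ← rpow_sub hk]
    ring_nf
  have hden : 0 ≤ ∫ x in Ω, |v x| ^ q := integral_nonneg fun _ => by positivity
  unfold rayleighQuot
  simp_rw [fderiv_comp_add_smul, norm_smul, Real.norm_of_nonneg hk.le,
    mul_rpow hk.le (norm_nonneg _)]
  rw [integral_const_mul, setIntegral_preimage_add_smul hk c hΩ (fun x => ‖fderiv ℝ v x‖ ^ p),
    setIntegral_preimage_add_smul hk c hΩ (fun x => |v x| ^ q),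
    mul_rpow (by positivity) hden, ← rpow_mul hk.le, hexp, div_mul_div_comm]
  ring

lemma IsDirichletTestFunction.comp_add_smul {v : EuclideanSpace ℝ (Fin N) → ℝ}
    (hv : IsDirichletTestFunction Ω v) (c : EuclideanSpace ℝ (Fin N)) (hk : k ≠ 0) :
    IsDirichletTestFunction ((fun y => c + k • y) ⁻¹' Ω) (fun y => v (c + k • y)) where
  contDiff := hv.contDiff.comp (by fun_prop)
  hasCompactSupport := hv.hasCompactSupport.comp_homeomorph
    ((Homeomorph.smulOfNeZero k hk).trans (Homeomorph.addLeft c))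
  tsupport_subset :=
    (tsupport_comp_subset_preimage v (by fun_prop)).trans (preimage_mono hv.tsupport_subset)
  exists_ne_zero := by
    obtain ⟨x, hx, hvx⟩ := hv.exists_ne_zero
    have hT : c + k • (k⁻¹ • (x - c)) = x := by rw [smul_inv_smul₀ hk, add_sub_cancel]
    exact ⟨k⁻¹ • (x - c), by rwa [mem_preimage, hT], by rwa [hT]⟩

lemma lambdaPQ_preimage_add_smul_le (p q : ℝ) (hk : 0 < k) (c : EuclideanSpace ℝ (Fin N))
    (hΩ : IsOpen Ω) (hne : Ω.Nonempty) :
    lambdaPQ p q ((fun y => c + k • y) ⁻¹' Ω) ≤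
      lambdaPQ p q Ω * k ^ (p + N * p / q - N) := by
  have hkpow : 0 < k ^ (p + N * p / q - N) := rpow_pos_of_pos hk _
  rw [← div_le_iff₀ hkpow]
  refine le_lambdaPQ hΩ hne fun v hv => ?_
  rw [div_le_iff₀ hkpow, ← rayleighQuot_comp_add_smul p q hk c hΩ.measurableSet]
  exact lambdaPQ_le_rayleighQuot p q (hv.comp_add_smul c hk.ne')

lemma lambdaPQ_ball_le (p q : ℝ) {r R : ℝ} (hr : 0 < r) (hR : 0 < R)
    (c c' : EuclideanSpace ℝ (Fin N)) :
    lambdaPQ p q (ball c' R) ≤ lambdaPQ p q (ball c r) * (r / R) ^ (p + N * p / q - N) := by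
  have hk : 0 < r / R := div_pos hr hR
  have hball : (fun y => (c - (r / R) • c') + (r / R) • y) ⁻¹' ball c r = ball c' R := by
    ext y
    rw [mem_preimage, mem_ball_iff_norm, mem_ball_iff_norm,
      show c - (r / R) • c' + (r / R) • y - c = (r / R) • (y - c') by rw [smul_sub]; abel,
      norm_smul, Real.norm_of_nonneg hk.le, div_mul_eq_mul_div, div_lt_iff₀ hR,
      mul_lt_mul_iff_right₀ hr]
  rw [← hball]
  exact lambdaPQ_preimage_add_smul_le p q hk _ isOpen_ball (nonempty_ball.2 hr)

end Scaling

section LipschitzCompetitors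

variable {N : ℕ} {p q : ℝ} {K : NNReal} {w : EuclideanSpace ℝ (Fin N) → ℝ} {R : ℝ}

lemma lambdaPQ_ball_mul_le_of_lt (hp : 0 < p) (hq : 0 < q) {r : ℝ} (hrR : r < R)
    (hw : LipschitzWith K w) (h : ∀ x, r ≤ ‖x‖ → w x = 0) :
    lambdaPQ p q (ball (0 : EuclideanSpace ℝ (Fin N)) R) * (∫ x, |w x| ^ q) ^ (p / q) ≤
      ∫ x, ‖fderiv ℝ w x‖ ^ p := by
  have hδ : 0 < (R - r) / 2 := by linarith
  refine le_of_tendsto_of_tendsto'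
    (((mollification.tendsto_integral_abs_rpow hδ hq hw h).rpow_const
      (Or.inr (div_pos hp hq).le)).const_mul _)
    (mollification.tendsto_integral_norm_fderiv_rpow hδ hp hw h) fun n => ?_
  have hzero := mollification.eq_zero (μ := volume) hδ h n
  refine lambdaPQ_mul_le_of_contDiff hp hq (mollification.contDiff hδ hw.continuous n)
    (hasCompactSupport_of_eq_zero_of_le_norm hzero) ?_
  have hball : tsupport (mollification volume hδ n w) ⊆ closedBall 0 (r + (R - r) / 2) := by
    refine closure_minimal (fun x hx => ?_) isClosed_closedBall
    rw [mem_closedBall_zero_iff]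
    exact le_of_not_ge fun hxr => hx (hzero x hxr)
  exact hball.trans (closedBall_subset_ball (by linarith))

/-- Mollification needs a little room, which is gained by comparing with larger balls. -/
lemma lambdaPQ_ball_mul_le (hp : 0 < p) (hq : 0 < q) (hR : 0 < R) (hw : LipschitzWith K w)
    (h : ∀ x, R ≤ ‖x‖ → w x = 0) :
    lambdaPQ p q (ball (0 : EuclideanSpace ℝ (Fin N)) R) * (∫ x, |w x| ^ q) ^ (p / q) ≤
      ∫ x, ‖fderiv ℝ w x‖ ^ p := by
  set s := p + N * p / q - N
  have hlim : Tendsto (fun r => (∫ x, ‖fderiv ℝ w x‖ ^ p) * (r / R) ^ s) (𝓝[>] R)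
      (𝓝 (∫ x, ‖fderiv ℝ w x‖ ^ p)) := by
    have hratio : Tendsto (fun r => r / R) (𝓝[>] R) (𝓝 1) := by
      have hid : Tendsto id (𝓝[>] R) (𝓝 R) := nhdsWithin_le_nhds
      simpa [div_self hR.ne'] using hid.div_const R
    simpa using (hratio.rpow_const (p := s) (Or.inl one_ne_zero)).const_mul _
  refine ge_of_tendsto hlim ?_
  filter_upwards [self_mem_nhdsWithin] with r hr
  have hr₀ : 0 < r := hR.trans hr
  calc
    _ ≤ lambdaPQ p q (ball (0 : EuclideanSpace ℝ (Fin N)) r) * (r / R) ^ s *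
          (∫ x, |w x| ^ q) ^ (p / q) := by
      gcongr
      exact lambdaPQ_ball_le p q hr₀ hR 0 0
    _ = lambdaPQ p q (ball (0 : EuclideanSpace ℝ (Fin N)) r) * (∫ x, |w x| ^ q) ^ (p / q) *
          (r / R) ^ s := by ring
    _ ≤ _ := by
      gcongr
      exact lambdaPQ_ball_mul_le_of_lt hp hq hr hw h

end LipschitzCompetitors

section SobolevInequality

variable {N : ℕ} {p q : ℝ}

lemma ltCritical.exists_sobolev_exponent (hN : 2 ≤ N) (hp : 1 ≤ p) (hq₀ : 0 < q)
    (hq : ltCritical N p q) : ∃ s : ℝ, 1 ≤ s ∧ s < N ∧ s ≤ p ∧ s⁻¹ - (N : ℝ)⁻¹ ≤ q⁻¹ := by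
  have hN' : (2 : ℝ) ≤ N := by exact_mod_cast hN
  have hp₀ : 0 < p := one_pos.trans_le hp
  rcases lt_or_ge p N with hpN | hpN
  · refine ⟨p, hp, hpN, le_rfl, ?_⟩
    have hsub : 0 < (N : ℝ) - p := sub_pos.2 hpN
    calc
      p⁻¹ - (N : ℝ)⁻¹ = (N * p / (N - p))⁻¹ := by field_simp [hp₀.ne', hsub.ne']
      _ ≤ q⁻¹ := inv_anti₀ hq₀ (hq hpN).le
  · have hsum : (0 : ℝ) < N + q := by linarith
    have hlt : N * q / (N + q) < N := by rw [div_lt_iff₀ hsum]; nlinarith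
    refine ⟨max 1 (N * q / (N + q)), le_max_left _ _, max_lt (by linarith) hlt,
      max_le hp (hlt.le.trans hpN), ?_⟩
    calc
      _ ≤ (N * q / (N + q))⁻¹ - (N : ℝ)⁻¹ := by
        gcongr
        exact le_max_right _ _
      _ = q⁻¹ := by field_simp; ring

variable {Ω : Set (EuclideanSpace ℝ (Fin N))}

lemma eLpNorm_le_eLpNorm_mul_volume_rpow {F : Type*} [NormedAddCommGroup F]
    {f : EuclideanSpace ℝ (Fin N) → F} (hf : Continuous f) (hfΩ : Function.support f ⊆ Ω)
    {s p : NNReal} (hsp : s ≤ p) :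
    eLpNorm f s ≤ eLpNorm f p * volume Ω ^ (1 / (s : ℝ) - 1 / p) := by
  have h := eLpNorm_le_eLpNorm_mul_rpow_measure_univ (μ := volume.restrict Ω)
    (ENNReal.coe_le_coe.2 hsp) hf.aestronglyMeasurable
  rwa [eLpNorm_restrict_eq_of_support_subset hfΩ, eLpNorm_restrict_eq_of_support_subset hfΩ,
    Measure.restrict_apply_univ] at h

lemma exists_eLpNorm_le_mul_eLpNorm_fderiv (hN : 2 ≤ N) (hp : 1 ≤ p) (hq₀ : 0 < q)
    (hq : ltCritical N p q) (hΩ : Bornology.IsBounded Ω) :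
    ∃ C : NNReal, ∀ v : EuclideanSpace ℝ (Fin N) → ℝ, ContDiff ℝ 1 v → tsupport v ⊆ Ω →
      eLpNorm v (ENNReal.ofReal q) ≤ C * eLpNorm (fderiv ℝ v) (ENNReal.ofReal p) := by
  obtain ⟨s, hs₁, hsN, hsp, hsq⟩ := hq.exists_sobolev_exponent hN hp hq₀
  lift s to NNReal using zero_le_one.trans hs₁
  set D := volume Ω ^ (1 / (s : ℝ) - 1 / p.toNNReal)
  have hsp' : s ≤ p.toNNReal := NNReal.le_toNNReal_of_coe_le hsp
  have hD : D ≠ ⊤ := by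
    refine ENNReal.rpow_ne_top_of_nonneg ?_ hΩ.measure_lt_top.ne
    exact sub_nonneg.2 (one_div_le_one_div_of_le (by linarith) hsp')
  set C := eLpNormLESNormFDerivOfLeConst ℝ (volume : Measure (EuclideanSpace ℝ (Fin N))) Ω s
    q.toNNReal
  refine ⟨C * D.toNNReal, fun v hv hvΩ => ?_⟩
  have hsobolev : eLpNorm v (ENNReal.ofReal q) ≤ C * eLpNorm (fderiv ℝ v) s :=
    eLpNorm_le_eLpNorm_fderiv_of_le volume hv ((subset_tsupport v).trans hvΩ)
      (by exact_mod_cast hs₁) (by rw [finrank_euclideanSpace_fin]; exact_mod_cast hsN)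
      (by rwa [finrank_euclideanSpace_fin, Real.coe_toNNReal q hq₀.le]) hΩ
  have hholder : eLpNorm (fderiv ℝ v) s ≤ eLpNorm (fderiv ℝ v) (ENNReal.ofReal p) * D :=
    eLpNorm_le_eLpNorm_mul_volume_rpow (hv.continuous_fderiv one_ne_zero)
      ((support_fderiv_subset ℝ).trans hvΩ) hsp'
  rw [ENNReal.coe_mul, ENNReal.coe_toNNReal hD, mul_assoc, mul_comm D]
  exact hsobolev.trans (by gcongr)

lemma toReal_eLpNorm_ofReal {α F : Type*} [MeasurableSpace α] {μ : Measure α}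
    [NormedAddCommGroup F] {f : α → F} (hp : 0 < p) (hf : MemLp f (ENNReal.ofReal p) μ) :
    (eLpNorm f (ENNReal.ofReal p) μ).toReal = (∫ x, ‖f x‖ ^ p ∂μ) ^ p⁻¹ := by
  rw [hf.eLpNorm_eq_integral_rpow_norm (ENNReal.ofReal_pos.2 hp).ne' ENNReal.ofReal_ne_top,
    ENNReal.toReal_ofReal hp.le, ENNReal.toReal_ofReal (by positivity)]

lemma exists_integral_rpow_le_mul_integral_norm_fderiv_rpow (hN : 2 ≤ N) (hp : 1 ≤ p)
    (hq₀ : 0 < q) (hq : ltCritical N p q) (hΩ : Bornology.IsBounded Ω) :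
    ∃ C : ℝ, 0 < C ∧ ∀ v : EuclideanSpace ℝ (Fin N) → ℝ, ContDiff ℝ 1 v → HasCompactSupport v →
      tsupport v ⊆ Ω → (∫ x, |v x| ^ q) ^ (p / q) ≤ C * ∫ x, ‖fderiv ℝ v x‖ ^ p := by
  have hp₀ : 0 < p := one_pos.trans_le hp
  obtain ⟨C, hC⟩ := exists_eLpNorm_le_mul_eLpNorm_fderiv hN hp hq₀ hq hΩ
  refine ⟨(C + 1) ^ p, by positivity, fun v hv hvs hvΩ => ?_⟩
  have hvq := hv.continuous.memLp_of_hasCompactSupport (p := ENNReal.ofReal q) (μ := volume) hvs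
  have hvp := (hv.continuous_fderiv one_ne_zero).memLp_of_hasCompactSupport
    (p := ENNReal.ofReal p) (μ := volume) (hvs.fderiv ℝ)
  have hA : 0 ≤ ∫ x, ‖fderiv ℝ v x‖ ^ p := integral_nonneg fun _ => by positivity
  have hB : 0 ≤ ∫ x, |v x| ^ q := integral_nonneg fun _ => by positivity
  have hnorm : (∫ x, |v x| ^ q) ^ q⁻¹ ≤ C * (∫ x, ‖fderiv ℝ v x‖ ^ p) ^ p⁻¹ := by
    have h := ENNReal.toReal_mono (ENNReal.mul_ne_top ENNReal.coe_ne_top hvp.2.ne)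
      (hC v hv hvΩ)
    rwa [ENNReal.toReal_mul, toReal_eLpNorm_ofReal hq₀ hvq, toReal_eLpNorm_ofReal hp₀ hvp] at h
  calc
    (∫ x, |v x| ^ q) ^ (p / q) = ((∫ x, |v x| ^ q) ^ q⁻¹) ^ p := by
      rw [← rpow_mul hB, div_eq_inv_mul]
    _ ≤ ((C + 1) * (∫ x, ‖fderiv ℝ v x‖ ^ p) ^ p⁻¹) ^ p := by
      gcongr
      exact hnorm.trans (by gcongr; linarith)
    _ = (C + 1) ^ p * ∫ x, ‖fderiv ℝ v x‖ ^ p := by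
      rw [mul_rpow (by positivity) (by positivity), ← rpow_mul hA, inv_mul_cancel₀ hp₀.ne',
        rpow_one]

theorem lambdaPQ_pos (hN : 2 ≤ N) (hp : 1 ≤ p) (hq₀ : 0 < q) (hq : ltCritical N p q)
    (hΩ : IsOpen Ω) (hb : Bornology.IsBounded Ω) (hne : Ω.Nonempty) : 0 < lambdaPQ p q Ω := by
  obtain ⟨C, hC, h⟩ := exists_integral_rpow_le_mul_integral_norm_fderiv_rpow hN hp hq₀ hq hb
  refine (inv_pos.2 hC).trans_le (le_lambdaPQ hΩ hne fun v hv => ?_)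
  rw [hv.rayleighQuot_eq (by linarith) hq₀.ne',
    le_div_iff₀ (rpow_pos_of_pos (hv.integral_abs_rpow_pos hq₀) _), inv_mul_le_iff₀ hC]
  exact h v (hv.contDiff.of_le (by exact_mod_cast le_top)) hv.hasCompactSupport hv.tsupport_subset

end SobolevInequality

section LipschitzComposition

variable {E : Type*} [NormedAddCommGroup E] [NormedSpace ℝ E] [FiniteDimensional ℝ E]
  [MeasurableSpace E] [BorelSpace E] {p R : ℝ} {K : NNReal} {f : ℝ → ℝ} {w : E → ℝ}

lemma setIntegral_norm_fderiv_comp_rpow_le {μ : Measure E} [μ.IsAddHaarMeasure] (hp : 0 < p)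
    (hf : LipschitzWith 1 f) (hw : LipschitzWith K w) (h : ∀ x, R ≤ ‖x‖ → w x = 0) (s : Set E) :
    ∫ x in s, ‖fderiv ℝ (fun y => f (w y)) x‖ ^ p ∂μ ≤ ∫ x in s, ‖fderiv ℝ w x‖ ^ p ∂μ := by
  refine integral_mono_of_nonneg (Eventually.of_forall fun x => by positivity)
    (integrable_norm_fderiv_rpow hp hw h).integrableOn ?_
  filter_upwards [ae_restrict_of_ae (hw.ae_differentiableAt (μ := μ))] with x hx
  refine rpow_le_rpow (norm_nonneg _) (norm_fderiv_le_of_abs_sub_le (fun y => ?_) hx) hp.le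
  simpa [Real.dist_eq] using hf.dist_le_mul (w y) (w x)

end LipschitzComposition

section SchwarzSymmetrization

variable {E : Type*} [NormedAddCommGroup E] [InnerProductSpace ℝ E] [FiniteDimensional ℝ E]
  [MeasurableSpace E] [BorelSpace E] {p q R M : ℝ} {K : NNReal} {v w : E → ℝ}

lemma isRearrangementOf_self (hv : LipschitzWith K v) (hM : ∀ x, v x ∈ Icc 0 M)
    (h : ∀ x, R ≤ ‖x‖ → v x = 0) : IsRearrangementOf K R M v v :=
  ⟨hv, hM, h, fun _ _ _ => rfl, fun _ _ _ _ _ _ => le_rfl⟩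

lemma IsRearrangementOf.integral_norm_fderiv_rpow_le (h : IsRearrangementOf K R M v w)
    (hv : IsRearrangementOf K R M v v) (hp : 1 ≤ p) :
    ∫ x, ‖fderiv ℝ w x‖ ^ p ≤ ∫ x, ‖fderiv ℝ v x‖ ^ p := by
  have hint {u : E → ℝ} (hu : IsRearrangementOf K R M v u) :
      Integrable fun x => ‖fderiv ℝ u x‖ ^ p :=
    integrable_norm_fderiv_rpow (one_pos.trans_le hp) hu.lipschitzWith hu.eq_zero
  have hle := h.lintegral_norm_fderiv_rpow_le hv hp
  rwa [← ofReal_integral_eq_lintegral_ofReal (hint h) (Eventually.of_forall fun x => by positivity),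
    ← ofReal_integral_eq_lintegral_ofReal (hint hv) (Eventually.of_forall fun x => by positivity),
    ENNReal.ofReal_le_ofReal_iff (integral_nonneg fun x => by positivity)] at hle

/-- The Pólya–Szegő inequality for the Schwarz symmetrization of `|v|`. -/
theorem exists_radiallyAntitone_integral_norm_fderiv_rpow_le (hp : 1 ≤ p) (hq : 0 < q)
    (hv : LipschitzWith K v) (h : ∀ x, R ≤ ‖x‖ → v x = 0) :
    ∃ w : E → ℝ, LipschitzWith K w ∧ (∀ x, 0 ≤ w x) ∧ (∀ x, R ≤ ‖x‖ → w x = 0) ∧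
      RadiallyAntitone w ∧ ∫ x, w x ^ q = ∫ x, |v x| ^ q ∧
      ∫ x, ‖fderiv ℝ w x‖ ^ p ≤ ∫ x, ‖fderiv ℝ v x‖ ^ p := by
  obtain ⟨M, hM⟩ :=
    (hasCompactSupport_of_eq_zero_of_le_norm h).exists_bound_of_continuous hv.continuous
  have habs : LipschitzWith 1 fun t : ℝ => |t| := lipschitzWith_one_norm
  have hself : IsRearrangementOf K R M (fun x => |v x|) (fun x => |v x|) :=
    isRearrangementOf_self (by simpa [Function.comp_def] using habs.comp hv)
      (fun x => ⟨abs_nonneg _, hM x⟩) (fun x hx => by rw [h x hx, abs_zero])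
  obtain ⟨w, hw, hanti⟩ := hself.exists_radiallyAntitone
  refine ⟨w, hw.lipschitzWith, hw.nonneg, hw.eq_zero, hanti,
    hw.integral_comp_eq (· ^ q) (continuous_rpow_const hq.le) (zero_rpow hq.ne'),
    (hw.integral_norm_fderiv_rpow_le hself hp).trans ?_⟩
  simpa using
    setIntegral_norm_fderiv_comp_rpow_le (μ := volume) (one_pos.trans_le hp) habs hv h univ

end SchwarzSymmetrization

section NearMinimizers

variable {N : ℕ} {p q R ε : ℝ} {K : NNReal} {v w : EuclideanSpace ℝ (Fin N) → ℝ}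

/-- `w` is a radially nonincreasing Lipschitz function, normalized in `L^q`, whose energy exceeds
the Dirichlet eigenvalue of `ball 0 R` by at most `ε`: a substitute for the radial
eigenfunction of the ball, extended by zero. -/
structure IsNearMinimizer (p q R ε : ℝ) (K : NNReal) (w : EuclideanSpace ℝ (Fin N) → ℝ) :
    Prop where
  lipschitzWith : LipschitzWith K w
  nonneg : ∀ x, 0 ≤ w x
  eq_zero : ∀ x, R ≤ ‖x‖ → w x = 0
  radiallyAntitone : RadiallyAntitone w
  integral_rpow : ∫ x, w x ^ q = 1
  integral_norm_fderiv_rpow_le :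
    ∫ x, ‖fderiv ℝ w x‖ ^ p ≤ lambdaPQ p q (ball (0 : EuclideanSpace ℝ (Fin N)) R) + ε

lemma isNearMinimizer_const_mul (hq : 0 < q) (hw : LipschitzWith K w) (h₀ : ∀ x, 0 ≤ w x)
    (h : ∀ x, R ≤ ‖x‖ → w x = 0) (hanti : RadiallyAntitone w) (hpos : 0 < ∫ x, w x ^ q)
    (hle : (∫ x, ‖fderiv ℝ w x‖ ^ p) / (∫ x, w x ^ q) ^ (p / q) ≤
      lambdaPQ p q (ball (0 : EuclideanSpace ℝ (Fin N)) R) + ε) :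
    IsNearMinimizer p q R ε (((∫ x, w x ^ q) ^ (-(1 / q))).toNNReal * K)
      fun x => (∫ x, w x ^ q) ^ (-(1 / q)) * w x := by
  set B := ∫ x, w x ^ q
  set b := B ^ (-(1 / q)) with hb
  have hb₀ : 0 < b := rpow_pos_of_pos hpos _
  have hbq : b ^ q = B⁻¹ := by
    rw [hb, ← rpow_mul hpos.le, ← rpow_neg_one]
    congr 1
    field_simp
  have hbp : b ^ p = (B ^ (p / q))⁻¹ := by
    rw [hb, ← rpow_mul hpos.le, ← rpow_neg hpos.le]
    ring_nf
  have hgrad (x : EuclideanSpace ℝ (Fin N)) :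
      ‖fderiv ℝ (fun y => b * w y) x‖ ^ p = b ^ p * ‖fderiv ℝ w x‖ ^ p := by
    rw [show (fun y => b * w y) = b • w from rfl, fderiv_const_smul_field, Pi.smul_apply,
      norm_smul, Real.norm_of_nonneg hb₀.le, mul_rpow hb₀.le (norm_nonneg _)]
  refine ⟨?_, fun x => mul_nonneg hb₀.le (h₀ x), fun x hx => by rw [h x hx, mul_zero],
    fun x y hxy => mul_le_mul_of_nonneg_left (hanti hxy) hb₀.le, ?_, ?_⟩
  · rw [Real.toNNReal_eq_nnnorm_of_nonneg hb₀.le]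
    exact (lipschitzWith_smul b).comp hw
  · simp_rw [mul_rpow hb₀.le (h₀ _)]
    rw [integral_const_mul, hbq, inv_mul_cancel₀ hpos.ne']
  · simp_rw [hgrad]
    rwa [integral_const_mul, hbp, ← div_eq_inv_mul]

theorem exists_isNearMinimizer (hp : 1 ≤ p) (hq : 0 < q) (hR : 0 < R) (hε : 0 < ε) :
    ∃ (K : NNReal) (w : EuclideanSpace ℝ (Fin N) → ℝ), IsNearMinimizer p q R ε K w := by
  set B := ball (0 : EuclideanSpace ℝ (Fin N)) R
  have hlt : sInf (rayleighQuot p q B '' {v | IsDirichletTestFunction B v}) <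
      lambdaPQ p q B + ε := by
    rw [← lambdaPQ_eq_sInf_image]
    exact lt_add_of_pos_right _ hε
  obtain ⟨_, ⟨v, hv, rfl⟩, hvlt⟩ := exists_lt_of_csInf_lt
    ((exists_isDirichletTestFunction isOpen_ball (nonempty_ball.2 hR)).image _) hlt
  have hpos := hv.integral_abs_rpow_pos hq
  rw [hv.rayleighQuot_eq (one_pos.trans_le hp).ne' hq.ne'] at hvlt
  obtain ⟨K, hK⟩ := hv.contDiff.lipschitzWith_of_hasCompactSupport hv.hasCompactSupport (by simp)
  have hzero : ∀ x, R ≤ ‖x‖ → v x = 0 := fun x hx =>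
    image_eq_zero_of_notMem_tsupport fun hxs =>
      hx.not_gt (mem_ball_zero_iff.1 (hv.tsupport_subset hxs))
  obtain ⟨w, hw, hw₀, hwzero, hanti, hmass, henergy⟩ :=
    exists_radiallyAntitone_integral_norm_fderiv_rpow_le hp hq hK hzero
  rw [← hmass] at hpos hvlt
  refine ⟨_, _, isNearMinimizer_const_mul hq hw hw₀ hwzero hanti hpos (le_trans ?_ hvlt.le)⟩
  gcongr

namespace IsNearMinimizer

lemma continuous (hw : IsNearMinimizer p q R ε K w) : Continuous w := hw.lipschitzWith.continuous

lemma integrable_rpow (hw : IsNearMinimizer p q R ε K w) {s : ℝ} (hs : 0 < s) :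
    Integrable fun x => w x ^ s :=
  integrable_comp_of_hasCompactSupport (continuous_rpow_const hs.le) (zero_rpow hs.ne')
    hw.continuous (hasCompactSupport_of_eq_zero_of_le_norm hw.eq_zero)

lemma integrable_norm_fderiv_rpow (hw : IsNearMinimizer p q R ε K w) (hp : 0 < p) :
    Integrable fun x => ‖fderiv ℝ w x‖ ^ p :=
  _root_.integrable_norm_fderiv_rpow hp hw.lipschitzWith hw.eq_zero

end IsNearMinimizer

end NearMinimizers

section PolarCoordinates

variable {E : Type*} [NormedAddCommGroup E] [NormedSpace ℝ E] {D : Set E}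

lemma norm_smul_sphere (ω : sphere (0 : E) 1) (r : Ioi (0 : ℝ)) : ‖(r : ℝ) • (ω : E)‖ = r := by
  rw [norm_smul, norm_eq_of_mem_sphere, mul_one, Real.norm_of_nonneg r.2.out.le]

lemma exists_forall_smul_mem_iff_lt (hD : IsOpen D) (hb : Bornology.IsBounded D)
    (hs : ∀ x ∈ D, ∀ t ∈ Ioc (0 : ℝ) 1, t • x ∈ D) {x : E} (hx : x ≠ 0) :
    ∃ ρ : ℝ, 0 ≤ ρ ∧ ∀ r > 0, r • x ∈ D ↔ r < ρ := by
  set S := {r : ℝ | 0 < r ∧ r • x ∈ D}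
  have hSo : IsOpen S := isOpen_Ioi.inter (hD.preimage (by fun_prop))
  have hSb : BddAbove S := by
    obtain ⟨T, hT⟩ := hb.exists_norm_le
    refine ⟨T / ‖x‖, fun r hr => ?_⟩
    rw [le_div_iff₀ (norm_pos_iff.2 hx)]
    simpa [norm_smul, abs_of_pos hr.1] using hT _ hr.2
  refine ⟨sSup S, Real.sSup_nonneg fun r hr => hr.1.le, fun r hr => ⟨fun h => ?_, fun h => ?_⟩⟩
  · obtain ⟨η, hη, hsub⟩ := Metric.isOpen_iff.1 hSo r ⟨hr, h⟩
    have hmem : r + η / 2 ∈ S := hsub (by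
      rw [mem_ball, Real.dist_eq, add_sub_cancel_left, abs_of_pos (half_pos hη)]
      exact half_lt_self hη)
    linarith [le_csSup hSb hmem]
  · have hS : S.Nonempty := by
      by_contra! hS
      rw [hS, Real.sSup_empty] at h
      exact h.not_gt hr
    obtain ⟨t, ht, hrt⟩ := exists_lt_of_lt_csSup hS h
    have hmem := hs _ ht.2 (r / t) ⟨div_pos hr ht.1, (div_le_one ht.1).2 hrt.le⟩
    rwa [smul_smul, div_mul_cancel₀ _ ht.1.ne'] at hmem

variable [FiniteDimensional ℝ E] [MeasurableSpace E] [BorelSpace E] (μ : Measure E)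
  [μ.IsAddHaarMeasure]

lemma integral_eq_integral_toSphere_prod [Nontrivial E] (g : E → ℝ) :
    ∫ x, g x ∂μ = ∫ z, g ((z.2 : ℝ) • (z.1 : E))
      ∂(μ.toSphere.prod (Measure.volumeIoiPow (finrank ℝ E - 1))) := by
  rw [← μ.measurePreserving_homeomorphUnitSphereProd.integral_comp
      (Homeomorph.measurableEmbedding _) (fun z => g ((z.2 : ℝ) • (z.1 : E))),
    ← restrict_compl_singleton (μ := μ) 0,
    ← integral_subtype_comap (measurableSet_singleton _).compl, restrict_compl_singleton]
  congr with x
  have hx : ‖(x : E)‖ ≠ 0 := norm_ne_zero_iff.2 x.2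
  simp [smul_smul, hx]

variable {μ}

lemma integrable_toSphere_prod [Nontrivial E] {g : E → ℝ} (hg : Integrable g μ) :
    Integrable (fun z => g ((z.2 : ℝ) • (z.1 : E)))
      (μ.toSphere.prod (Measure.volumeIoiPow (finrank ℝ E - 1))) := by
  rw [← μ.measurePreserving_homeomorphUnitSphereProd.integrable_comp_emb
    (Homeomorph.measurableEmbedding _)]
  rw [← restrict_compl_singleton (μ := μ) 0, ← IntegrableOn,
    integrableOn_iff_comap_subtypeVal (measurableSet_singleton _).compl] at hg
  convert hg using 1
  ext x
  have hx : ‖(x : E)‖ ≠ 0 := norm_ne_zero_iff.2 x.2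
  simp [smul_smul, hx]

lemma setIntegral_ball_fun_norm [Nontrivial E] (F : ℝ → ℝ) (ρ : ℝ) :
    ∫ x in ball (0 : E) ρ, F ‖x‖ ∂μ = μ.toSphere.real univ *
      ∫ r : Ioi (0 : ℝ), (Iio ρ).indicator F r ∂(Measure.volumeIoiPow (finrank ℝ E - 1)) := by
  have hind (z : sphere (0 : E) 1 × Ioi (0 : ℝ)) :
      (ball (0 : E) ρ).indicator (fun x => F ‖x‖) ((z.2 : ℝ) • (z.1 : E)) =
        (Iio ρ).indicator F (z.2 : ℝ) := by
    simp only [indicator, mem_ball_zero_iff, norm_smul_sphere, mem_Iio]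
  rw [← integral_indicator measurableSet_ball, integral_eq_integral_toSphere_prod]
  simp_rw [hind]
  rw [integral_fun_snd (fun r : Ioi (0 : ℝ) => (Iio ρ).indicator F (r : ℝ)), smul_eq_mul]

/-- A bounded open set that is star-shaped about `0` meets each ray in a segment issued from `0`,
on which the radial integral is controlled by the one over a ball. -/
theorem setIntegral_fun_norm_le_of_forall_ball [Nontrivial E] (hD : IsOpen D)
    (hb : Bornology.IsBounded D) (hs : ∀ x ∈ D, ∀ t ∈ Ioc (0 : ℝ) 1, t • x ∈ D) {F : ℝ → ℝ}
    (hF : Integrable (fun x => F ‖x‖) μ) {ε : ℝ} (hε : ∀ ρ ≥ 0, ∫ x in ball 0 ρ, F ‖x‖ ∂μ ≤ ε) :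
    ∫ x in D, F ‖x‖ ∂μ ≤ ε := by
  set ν := Measure.volumeIoiPow (finrank ℝ E - 1)
  have hσ : 0 < μ.toSphere.real univ :=
    ENNReal.toReal_pos (Measure.measure_univ_ne_zero.2 (Measure.toSphere_ne_zero μ))
      (measure_ne_top _ _)
  have hray (ω : sphere (0 : E) 1) :
      ∫ r : Ioi (0 : ℝ), D.indicator (fun x => F ‖x‖) ((r : ℝ) • (ω : E)) ∂ν ≤
        ε / μ.toSphere.real univ := by
    obtain ⟨ρ, hρ, hDρ⟩ := exists_forall_smul_mem_iff_lt hD hb hs (ne_zero_of_mem_unit_sphere ω)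
    have hind (r : Ioi (0 : ℝ)) : D.indicator (fun x => F ‖x‖) ((r : ℝ) • (ω : E)) =
        (Iio ρ).indicator F r := by
      simp only [indicator, norm_smul_sphere, mem_Iio, hDρ r r.2]
    simp_rw [hind]
    rw [le_div_iff₀' hσ, ← setIntegral_ball_fun_norm]
    exact hε ρ hρ
  have hint := integrable_toSphere_prod (hF.indicator hD.measurableSet)
  rw [← integral_indicator hD.measurableSet, integral_eq_integral_toSphere_prod,
    integral_prod _ hint]
  calc
    _ ≤ ∫ _ : sphere (0 : E) 1, ε / μ.toSphere.real univ ∂μ.toSphere :=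
      integral_mono hint.integral_prod_left (integrable_const _) hray
    _ = ε := by rw [integral_const, smul_eq_mul, mul_div_cancel₀ _ hσ.ne']

end PolarCoordinates

lemma RadiallyAntitone.norm_fderiv_eq_of_norm_eq {E : Type*} [NormedAddCommGroup E]
    [InnerProductSpace ℝ E] {w : E → ℝ} (hw : RadiallyAntitone w) {x y : E} (h : ‖x‖ = ‖y‖) :
    ‖fderiv ℝ w x‖ = ‖fderiv ℝ w y‖ := by
  set L := (ℝ ∙ (x - y))ᗮ.reflection
  have hL : L x = y := Submodule.reflection_sub h
  have hcomp : w ∘ L.toContinuousLinearEquiv = w :=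
    funext fun z => hw.eq_of_norm_eq (L.norm_map z)
  have hfderiv := L.toContinuousLinearEquiv.comp_right_fderiv (f := w) (x := x)
  rw [hcomp] at hfderiv
  rw [hfderiv]
  exact (ContinuousLinearMap.opNorm_comp_linearIsometryEquiv _ L).trans (by simp [hL])

section NearMinimizersOnStarShapedSets

variable {N : ℕ} {p q R ρ ε : ℝ} {K : NNReal}
  {w : EuclideanSpace ℝ (Fin N) → ℝ}

namespace IsNearMinimizer

/-- Truncating `w` at its value on the sphere of radius `ρ` kills the gradient in the ball. -/
lemma integral_norm_fderiv_min_rpow_le (hw : IsNearMinimizer p q R ε K w) (hp : 0 < p)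
    {y : EuclideanSpace ℝ (Fin N)} (hy : ‖y‖ = ρ) :
    ∫ x, ‖fderiv ℝ (fun z => min (w z) (w y)) x‖ ^ p ≤
      ∫ x in (ball 0 ρ)ᶜ, ‖fderiv ℝ w x‖ ^ p := by
  rw [← setIntegral_eq_integral_of_forall_compl_eq_zero (s := (ball 0 ρ)ᶜ) fun x hx => ?_]
  · exact setIntegral_norm_fderiv_comp_rpow_le hp (LipschitzWith.id.min_const (w y))
      hw.lipschitzWith hw.eq_zero _
  · have hconst : (fun z => min (w z) (w y)) =ᶠ[𝓝 x] fun _ => w y := by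
      filter_upwards [isOpen_ball.mem_nhds (not_notMem.1 hx)] with z hz
      exact min_eq_right (hw.radiallyAntitone (by rw [hy]; exact (mem_ball_zero_iff.1 hz).le))
    rw [hconst.fderiv_eq, fderiv_fun_const, Pi.zero_apply, norm_zero, zero_rpow hp.ne']

lemma setIntegral_compl_ball_rpow_le (hw : IsNearMinimizer p q R ε K w)
    {y : EuclideanSpace ℝ (Fin N)} (hy : ‖y‖ = ρ) (hmin : Integrable fun x => min (w x) (w y) ^ q) :
    ∫ x in (ball 0 ρ)ᶜ, w x ^ q ≤ ∫ x, min (w x) (w y) ^ q := by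
  have heq : ∀ x ∈ (ball 0 ρ)ᶜ, w x ^ q = min (w x) (w y) ^ q := fun x hx => by
    rw [min_eq_left (hw.radiallyAntitone (by simpa [hy] using hx))]
  rw [setIntegral_congr_fun measurableSet_ball.compl heq]
  exact setIntegral_le_integral hmin
    (Eventually.of_forall fun x => rpow_nonneg (le_min (hw.nonneg x) (hw.nonneg y)) q)

variable [Nontrivial (EuclideanSpace ℝ (Fin N))]

lemma lambdaPQ_mul_setIntegral_compl_ball_le (hw : IsNearMinimizer p q R ε K w) (hp : 0 < p)
    (hpq : p ≤ q) (hR : 0 < R) (hρ : 0 ≤ ρ) :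
    lambdaPQ p q (ball (0 : EuclideanSpace ℝ (Fin N)) R) * ∫ x in (ball 0 ρ)ᶜ, w x ^ q ≤
      ∫ x in (ball 0 ρ)ᶜ, ‖fderiv ℝ w x‖ ^ p := by
  have hq : 0 < q := hp.trans_le hpq
  obtain ⟨y, hy⟩ := exists_norm_eq (EuclideanSpace ℝ (Fin N)) hρ
  set g := fun x => min (w x) (w y)
  have hg : LipschitzWith K g := hw.lipschitzWith.min_const (w y)
  have hg₀ : ∀ x, 0 ≤ g x := fun x => le_min (hw.nonneg x) (hw.nonneg y)
  have hgzero : ∀ x, R ≤ ‖x‖ → g x = 0 := fun x hx => by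
    simp only [g, hw.eq_zero x hx, min_eq_left (hw.nonneg y)]
  have hmass : ∫ x in (ball 0 ρ)ᶜ, w x ^ q ≤ ∫ x, g x ^ q :=
    hw.setIntegral_compl_ball_rpow_le hy (integrable_comp_of_hasCompactSupport
      (continuous_rpow_const hq.le) (zero_rpow hq.ne') hg.continuous
      (hasCompactSupport_of_eq_zero_of_le_norm hgzero))
  set m := ∫ x in (ball 0 ρ)ᶜ, w x ^ q
  have hm₀ : 0 ≤ m := integral_nonneg fun x => rpow_nonneg (hw.nonneg x) q
  have hm₁ : m ≤ 1 := hw.integral_rpow ▸ setIntegral_le_integral (hw.integrable_rpow hq)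
    (Eventually.of_forall fun x => rpow_nonneg (hw.nonneg x) q)
  have hpow : m ≤ (∫ x, g x ^ q) ^ (p / q) := calc
    m = m ^ (1 : ℝ) := (rpow_one m).symm
    _ ≤ m ^ (p / q) :=
      rpow_le_rpow_of_exponent_ge' hm₀ hm₁ (by positivity) ((div_le_one hq).2 hpq)
    _ ≤ (∫ x, g x ^ q) ^ (p / q) := by gcongr
  have hadm := lambdaPQ_ball_mul_le hp hq hR hg hgzero
  simp_rw [abs_of_nonneg (hg₀ _)] at hadm
  calc
    _ ≤ lambdaPQ p q (ball (0 : EuclideanSpace ℝ (Fin N)) R) * (∫ x, g x ^ q) ^ (p / q) :=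
      mul_le_mul_of_nonneg_left hpow (lambdaPQ_nonneg _ _ _)
    _ ≤ ∫ x, ‖fderiv ℝ g x‖ ^ p := hadm
    _ ≤ _ := hw.integral_norm_fderiv_min_rpow_le hp hy

/-- The excess density of energy over mass is radial, so integrating it over a star-shaped set
reduces to balls, whose complements are controlled by truncation. -/
theorem setIntegral_norm_fderiv_rpow_le (hw : IsNearMinimizer p q R ε K w) (hp : 0 < p)
    (hpq : p ≤ q) (hR : 0 < R) {D : Set (EuclideanSpace ℝ (Fin N))} (hD : IsOpen D)
    (hb : Bornology.IsBounded D) (hs : ∀ x ∈ D, ∀ t ∈ Ioc (0 : ℝ) 1, t • x ∈ D) :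
    ∫ x in D, ‖fderiv ℝ w x‖ ^ p ≤
      lambdaPQ p q (ball (0 : EuclideanSpace ℝ (Fin N)) R) * (∫ x in D, w x ^ q) + ε := by
  have hq : 0 < q := hp.trans_le hpq
  set l := lambdaPQ p q (ball (0 : EuclideanSpace ℝ (Fin N)) R)
  have hgrad := hw.integrable_norm_fderiv_rpow hp
  have hmass := hw.integrable_rpow hq
  have hsub (A : Set (EuclideanSpace ℝ (Fin N))) :
      ∫ x in A, (‖fderiv ℝ w x‖ ^ p - l * w x ^ q) =
        (∫ x in A, ‖fderiv ℝ w x‖ ^ p) - l * ∫ x in A, w x ^ q := by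
    rw [integral_sub hgrad.integrableOn (hmass.const_mul l).integrableOn, integral_const_mul]
  obtain ⟨e, he⟩ := exists_norm_eq (EuclideanSpace ℝ (Fin N)) zero_le_one
  set F : ℝ → ℝ := fun r => ‖fderiv ℝ w (r • e)‖ ^ p - l * w (r • e) ^ q with hF
  have hradial (x : EuclideanSpace ℝ (Fin N)) : ‖fderiv ℝ w x‖ ^ p - l * w x ^ q = F ‖x‖ := by
    have hx : ‖x‖ = ‖‖x‖ • e‖ := by rw [norm_smul, he, mul_one, norm_norm]
    simp only [hF, hw.radiallyAntitone.norm_fderiv_eq_of_norm_eq hx,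
      hw.radiallyAntitone.eq_of_norm_eq hx]
  have hball : ∀ ρ ≥ 0, ∫ x in ball (0 : EuclideanSpace ℝ (Fin N)) ρ, F ‖x‖ ≤ ε := fun ρ hρ => by
    simp_rw [← hradial]
    rw [hsub]
    have hcompl := hw.lambdaPQ_mul_setIntegral_compl_ball_le hp hpq hR hρ
    have hmass_split := integral_add_compl (measurableSet_ball (x := 0) (ε := ρ)) hmass
    have hgrad_split := integral_add_compl (measurableSet_ball (x := 0) (ε := ρ)) hgrad
    rw [hw.integral_rpow] at hmass_split
    rw [eq_sub_of_add_eq hmass_split, mul_sub]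
    linarith [hw.integral_norm_fderiv_rpow_le]
  have hint : Integrable fun x : EuclideanSpace ℝ (Fin N) => F ‖x‖ := by
    simp_rw [← hradial]
    exact hgrad.sub (hmass.const_mul l)
  have hle := setIntegral_fun_norm_le_of_forall_ball hD hb hs hint hball
  simp_rw [← hradial] at hle
  linarith [hsub D]

end IsNearMinimizer

end NearMinimizersOnStarShapedSets

section Nonconcentration

lemma ltCritical.exponent_pos {N : ℕ} {p q : ℝ} (h : ltCritical N p q) (hp : 0 < p) (hq : 0 < q) :
    0 < p + N * p / q - N := by
  rcases lt_or_ge p N with hpN | hpN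
  · have hlt := h hpN
    rw [lt_div_comm₀ hq (sub_pos.2 hpN)] at hlt
    linarith
  · rcases N.eq_zero_or_pos with rfl | hN
    · simpa using hp
    · have : 0 < N * p / q := by positivity
      linarith

lemma integral_norm_add_rpow_rpow_inv_le {α F : Type*} [MeasurableSpace α] {μ : Measure α}
    [NormedAddCommGroup F] {f g : α → F} {p : ℝ} (hp : 1 ≤ p) (hf : MemLp f (ENNReal.ofReal p) μ)
    (hg : MemLp g (ENNReal.ofReal p) μ) :
    (∫ x, ‖f x + g x‖ ^ p ∂μ) ^ p⁻¹ ≤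
      (∫ x, ‖f x‖ ^ p ∂μ) ^ p⁻¹ + (∫ x, ‖g x‖ ^ p ∂μ) ^ p⁻¹ := by
  have hp₀ : 0 < p := one_pos.trans_le hp
  rw [← toReal_eLpNorm_ofReal hp₀ hf, ← toReal_eLpNorm_ofReal hp₀ hg,
    ← ENNReal.toReal_add hf.2.ne hg.2.ne]
  simp_rw [← Pi.add_apply f g]
  rw [← toReal_eLpNorm_ofReal hp₀ (hf.add hg)]
  exact ENNReal.toReal_mono (ENNReal.add_ne_top.2 ⟨hf.2.ne, hg.2.ne⟩)
    (eLpNorm_add_le hf.1 hg.1 (ENNReal.one_le_ofReal.2 hp))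

variable {N : ℕ} {p q r R ε : ℝ} {K : NNReal} {w : EuclideanSpace ℝ (Fin N) → ℝ}

namespace IsNearMinimizer

lemma lambdaPQ_mul_integral_max_sub_rpow_le (hw : IsNearMinimizer p q R ε K w) (hp : 0 < p)
    (hq : 0 < q) (hR : 0 < R) (hr : 0 < r) {y : EuclideanSpace ℝ (Fin N)} (hy : ‖y‖ = r) :
    lambdaPQ p q (ball (0 : EuclideanSpace ℝ (Fin N)) R) *
        (∫ x, max (w x - w y) 0 ^ q) ^ (p / q) ≤
      (r / R) ^ (p + N * p / q - N) *
        (lambdaPQ p q (ball (0 : EuclideanSpace ℝ (Fin N)) R) + ε) := by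
  have hf : LipschitzWith 1 fun t : ℝ => max (t - w y) 0 := by
    simpa using (LipschitzWith.id.sub (LipschitzWith.const (w y))).max_const 0
  have hzero : ∀ x, r ≤ ‖x‖ → max (w x - w y) 0 = 0 := fun x hx =>
    max_eq_right (sub_nonpos.2 (hw.radiallyAntitone (hy.trans_le hx)))
  have hadm := lambdaPQ_ball_mul_le hp hq hr (hf.comp hw.lipschitzWith) hzero
  simp_rw [Function.comp_apply, abs_of_nonneg (le_max_right (w _ - w y) 0)] at hadm
  have hgrad : ∫ x, ‖fderiv ℝ (fun z => max (w z - w y) 0) x‖ ^ p ≤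
      ∫ x, ‖fderiv ℝ w x‖ ^ p := by
    simpa using setIntegral_norm_fderiv_comp_rpow_le (μ := volume) hp hf hw.lipschitzWith
      hw.eq_zero univ
  calc
    _ ≤ lambdaPQ p q (ball (0 : EuclideanSpace ℝ (Fin N)) r) * (r / R) ^ (p + N * p / q - N) *
        (∫ x, max (w x - w y) 0 ^ q) ^ (p / q) := by
      gcongr
      exact lambdaPQ_ball_le p q hr hR 0 0
    _ = (r / R) ^ (p + N * p / q - N) * (lambdaPQ p q (ball (0 : EuclideanSpace ℝ (Fin N)) r) *
        (∫ x, max (w x - w y) 0 ^ q) ^ (p / q)) := by ring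
    _ ≤ _ := by
      gcongr
      exact hadm.trans (hgrad.trans hw.integral_norm_fderiv_rpow_le)

lemma integral_min_rpow_le (hw : IsNearMinimizer p q R ε K w) (hq : 0 < q)
    (y : EuclideanSpace ℝ (Fin N)) :
    ∫ x, min (w x) (w y) ^ q ≤
      w y ^ q * volume.real (closedBall (0 : EuclideanSpace ℝ (Fin N)) R) := by
  have hzero : ∀ x ∉ closedBall (0 : EuclideanSpace ℝ (Fin N)) R, min (w x) (w y) ^ q = 0 := by
    intro x hx
    rw [hw.eq_zero x (not_le.1 (mem_closedBall_zero_iff.not.1 hx)).le,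
      min_eq_left (hw.nonneg y), zero_rpow hq.ne']
  rw [← setIntegral_eq_integral_of_forall_compl_eq_zero hzero]
  calc
    _ ≤ ∫ _ in closedBall (0 : EuclideanSpace ℝ (Fin N)) R, w y ^ q :=
      integral_mono_of_nonneg
        (Eventually.of_forall fun x => rpow_nonneg (le_min (hw.nonneg x) (hw.nonneg y)) q)
        (integrableOn_const measure_closedBall_lt_top.ne)
        (Eventually.of_forall fun x =>
          rpow_le_rpow (le_min (hw.nonneg x) (hw.nonneg y)) (min_le_right _ _) hq.le)
    _ = _ := by rw [setIntegral_const, smul_eq_mul, mul_comm]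

lemma one_le_integral_max_sub_rpow_add (hw : IsNearMinimizer p q R ε K w) (hq : 1 ≤ q)
    (y : EuclideanSpace ℝ (Fin N)) :
    1 ≤ (∫ x, max (w x - w y) 0 ^ q) ^ q⁻¹ +
      w y * volume.real (closedBall (0 : EuclideanSpace ℝ (Fin N)) R) ^ q⁻¹ := by
  have hq₀ : 0 < q := one_pos.trans_le hq
  have hmax : MemLp (fun x => max (w x - w y) 0) (ENNReal.ofReal q) :=
    ((hw.continuous.sub continuous_const).max continuous_const).memLp_of_hasCompactSupport
      (hasCompactSupport_of_eq_zero_of_le_norm (R := R) fun x hx => by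
        simp [hw.eq_zero x hx, hw.nonneg y])
  have hmin : MemLp (fun x => min (w x) (w y)) (ENNReal.ofReal q) :=
    (hw.continuous.min continuous_const).memLp_of_hasCompactSupport
      (hasCompactSupport_of_eq_zero_of_le_norm (R := R) fun x hx => by
        rw [hw.eq_zero x hx, min_eq_left (hw.nonneg y)])
  have hsplit (x) : max (w x - w y) 0 + min (w x) (w y) = w x := by
    rw [← sub_self (w y), max_sub_sub_right, sub_add_eq_add_sub, max_add_min, add_sub_cancel_right]
  have hminkowski := integral_norm_add_rpow_rpow_inv_le hq hmax hmin
  simp_rw [hsplit, Real.norm_of_nonneg (hw.nonneg _), Real.norm_of_nonneg (le_max_right _ (0 : ℝ)),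
    Real.norm_of_nonneg (le_min (hw.nonneg _) (hw.nonneg y)), hw.integral_rpow, one_rpow]
    at hminkowski
  refine hminkowski.trans (add_le_add_right ?_ _)
  calc
    _ ≤ (w y ^ q * volume.real (closedBall (0 : EuclideanSpace ℝ (Fin N)) R)) ^ q⁻¹ :=
      rpow_le_rpow
        (integral_nonneg fun x => rpow_nonneg (le_min (hw.nonneg x) (hw.nonneg y)) q)
        (hw.integral_min_rpow_le hq₀ y) (by positivity)
    _ = _ := by
      rw [mul_rpow (rpow_nonneg (hw.nonneg y) q) measureReal_nonneg, rpow_rpow_inv (hw.nonneg y)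
        hq₀.ne']

end IsNearMinimizer

variable [Nontrivial (EuclideanSpace ℝ (Fin N))]

/-- If `w` were small on the sphere of radius `r`, the excess `(w - w y)⁺`, `‖y‖ = r`, would nearly
be a competitor for the ball of radius `r`, whose eigenvalue is larger by a fixed factor. -/
theorem exists_pos_forall_isNearMinimizer_le (hp : 0 < p) (hq : 1 ≤ q) (hpq : ltCritical N p q)
    (hr : 0 < r) (hrR : r < R) (hl : 0 < lambdaPQ p q (ball (0 : EuclideanSpace ℝ (Fin N)) R)) :
    ∃ c > 0, ∃ ε₀ > 0, ∀ ε ≤ ε₀, ∀ (K : NNReal) (w : EuclideanSpace ℝ (Fin N) → ℝ),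
      IsNearMinimizer p q R ε K w → ∀ x, ‖x‖ ≤ r → c ≤ w x := by
  have hq₀ : 0 < q := one_pos.trans_le hq
  have hR : 0 < R := hr.trans hrR
  set l := lambdaPQ p q (ball (0 : EuclideanSpace ℝ (Fin N)) R) with hl_def
  set θ := (r / R) ^ (p + N * p / q - N) with hθ_def
  have hθ₁ : θ < 1 :=
    rpow_lt_one (by positivity) ((div_lt_one hR).2 hrR) (hpq.exponent_pos hp hq₀)
  set V := volume.real (closedBall (0 : EuclideanSpace ℝ (Fin N)) R) with hV_def
  have hV : 0 < V :=
    ENNReal.toReal_pos (measure_closedBall_pos _ _ hR).ne' measure_closedBall_lt_top.ne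
  set κ := ((1 + θ) / 2) ^ p⁻¹
  have hκ : κ < 1 := rpow_lt_one (by positivity) (by linarith) (by positivity)
  refine ⟨(1 - κ) / V ^ q⁻¹, div_pos (by linarith) (by positivity), l * (1 - θ) / (2 * θ),
    div_pos (mul_pos hl (by linarith)) (by positivity), fun ε hε K w hw x hx => ?_⟩
  obtain ⟨y, hy⟩ := exists_norm_eq (EuclideanSpace ℝ (Fin N)) hr.le
  have hA₀ : 0 ≤ ∫ z, max (w z - w y) 0 ^ q :=
    integral_nonneg fun z => rpow_nonneg (le_max_right _ _) q
  have hexcess := hw.lambdaPQ_mul_integral_max_sub_rpow_le hp hq₀ hR hr hy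
  have hsum := hw.one_le_integral_max_sub_rpow_add hq y
  rw [← hl_def, ← hθ_def] at hexcess
  rw [← hV_def] at hsum
  set A := ∫ z, max (w z - w y) 0 ^ q
  have hA : A ^ (p / q) ≤ (1 + θ) / 2 := by
    rw [le_div_iff₀ (by positivity)] at hε
    refine le_of_mul_le_mul_left ?_ hl
    linarith
  have hAκ : A ^ q⁻¹ ≤ κ := calc
    A ^ q⁻¹ = (A ^ (p / q)) ^ p⁻¹ := by
      rw [← rpow_mul hA₀]
      congr 1
      field_simp
    _ ≤ κ := rpow_le_rpow (rpow_nonneg hA₀ _) hA (by positivity)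
  have hxy : w y ≤ w x := hw.radiallyAntitone (hx.trans_eq hy.symm)
  refine le_trans ?_ hxy
  rw [div_le_iff₀ (by positivity)]
  linarith

end Nonconcentration

section NeumannTestFunction

lemma rpow_mul_add_rpow_mul_le {p q a b m₀ m₁ : ℝ} (hp : 0 < p) (hpq : p ≤ q) (ha : 0 ≤ a)
    (hb : 0 ≤ b) (hm₀ : 0 ≤ m₀) (hm₁ : 0 ≤ m₁) :
    a ^ p * m₀ + b ^ p * m₁ ≤
      (m₀ + m₁) ^ (1 - p / q) * (a ^ q * m₀ + b ^ q * m₁) ^ (p / q) := by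
  have hpow {s : ℝ} (hs : 0 ≤ s) : (s ^ p) ^ (q / p) = s ^ q := by
    rw [← rpow_mul hs, mul_div_cancel₀ _ hp.ne']
  have h := inner_le_weight_mul_Lp_of_nonneg Finset.univ ((one_le_div hp).2 hpq) ![m₀, m₁]
    ![a ^ p, b ^ p] (by simp [Fin.forall_fin_two, hm₀, hm₁])
    (by simp [Fin.forall_fin_two, rpow_nonneg ha, rpow_nonneg hb])
  simp only [Fin.sum_univ_two, Matrix.cons_val_zero, Matrix.cons_val_one, hpow ha, hpow hb,
    inv_div] at h
  simpa only [mul_comm] using h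

lemma abs_sub_rpow_of_eq_zero_or_eq_zero {s t q : ℝ} (hs : 0 ≤ s) (ht : 0 ≤ t) (hq : q ≠ 0)
    (h : s = 0 ∨ t = 0) : |s - t| ^ q = s ^ q + t ^ q := by
  rcases h with rfl | rfl
  · rw [zero_sub, abs_neg, abs_of_nonneg ht, zero_rpow hq, zero_add]
  · rw [sub_zero, abs_of_nonneg hs, zero_rpow hq, add_zero]

lemma abs_rpow_mul_sub_of_eq_zero_or_eq_zero {s t q : ℝ} (hs : 0 ≤ s) (ht : 0 ≤ t) (hq : q ≠ 1)
    (h : s = 0 ∨ t = 0) : |s - t| ^ (q - 2) * (s - t) = s ^ (q - 1) - t ^ (q - 1) := by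
  have hq₁ : q - 1 ≠ 0 := sub_ne_zero.2 hq
  have hsum : q - 2 + 1 = q - 1 := by ring
  have hmul {u : ℝ} (hu : 0 ≤ u) : u ^ (q - 2) * u = u ^ (q - 1) := by
    rw [← rpow_add_one' hu (hsum ▸ hq₁), hsum]
  rcases h with rfl | rfl
  · rw [zero_sub, abs_neg, abs_of_nonneg ht, mul_neg, hmul ht, zero_rpow hq₁, zero_sub]
  · rw [sub_zero, abs_of_nonneg hs, hmul hs, zero_rpow hq₁, sub_zero]

section NormedSpace

variable {E : Type*} [NormedAddCommGroup E] {f g : E → ℝ} {p : ℝ}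

lemma norm_fderiv_sub_rpow_of_eq_zero_or_eq_zero [NormedSpace ℝ E] {x : E} (hp : p ≠ 0)
    (hf : DifferentiableAt ℝ f x) (hg : DifferentiableAt ℝ g x) (hf₀ : ∀ y, 0 ≤ f y)
    (hg₀ : ∀ y, 0 ≤ g y) (h : f x = 0 ∨ g x = 0) :
    ‖fderiv ℝ (fun y => f y - g y) x‖ ^ p = ‖fderiv ℝ f x‖ ^ p + ‖fderiv ℝ g x‖ ^ p := by
  have hmin {u : E → ℝ} (hu : ∀ y, 0 ≤ u y) (hux : u x = 0) : fderiv ℝ u x = 0 :=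
    IsLocalMin.fderiv_eq_zero (Eventually.of_forall fun y => hux.trans_le (hu y))
  rw [fderiv_fun_sub hf hg]
  rcases h with h | h
  · rw [hmin hf₀ h, zero_sub, norm_neg, norm_zero, zero_rpow hp, zero_add]
  · rw [hmin hg₀ h, sub_zero, norm_zero, zero_rpow hp, add_zero]

variable [MeasurableSpace E] [BorelSpace E] {Ω : Set E} {μ : Measure E}

lemma integrableOn_rpow_of_isBounded [ProperSpace E] [IsFiniteMeasureOnCompacts μ]
    (hf : Continuous f) (hΩ : Bornology.IsBounded Ω) {s : ℝ} (hs : 0 ≤ s) :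
    IntegrableOn (fun x => f x ^ s) Ω μ :=
  ((hf.rpow_const fun _ => Or.inr hs).continuousOn.integrableOn_compact
    hΩ.isCompact_closure).mono_set subset_closure

lemma integrableOn_norm_fderiv_rpow_of_isBounded [NormedSpace ℝ E] [ProperSpace E]
    [IsFiniteMeasureOnCompacts μ] {K : NNReal} (hf : LipschitzWith K f)
    (hΩ : Bornology.IsBounded Ω) (hp : 0 ≤ p) :
    IntegrableOn (fun x => ‖fderiv ℝ f x‖ ^ p) Ω μ :=
  Measure.integrableOn_of_bounded (M := (K : ℝ) ^ p) hΩ.measure_lt_top.ne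
    ((measurable_fderiv ℝ f).norm.pow_const _).aestronglyMeasurable
    (Eventually.of_forall fun x => by
      rw [Real.norm_of_nonneg (by positivity)]
      exact rpow_le_rpow (norm_nonneg _) (norm_fderiv_le_of_lipschitz ℝ hf) hp)

lemma setIntegral_comp_sub_right {F : Type*} [NormedAddCommGroup F] [NormedSpace ℝ F]
    [μ.IsAddRightInvariant] (u : E → F) (c : E) :
    ∫ x in Ω, u (x - c) ∂μ = ∫ x in (· + c) ⁻¹' Ω, u x ∂μ := by
  simpa only [add_sub_cancel_right] using
    ((measurePreserving_add_right μ c).setIntegral_preimage_emb (measurableEmbedding_addRight c)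
      (fun x => u (x - c)) Ω).symm

lemma setIntegral_mul_comp_sub_rpow [μ.IsAddRightInvariant] {a : ℝ} (ha : 0 ≤ a)
    (hf : ∀ x, 0 ≤ f x) (c : E) (s : ℝ) :
    ∫ x in Ω, (a * f (x - c)) ^ s ∂μ = a ^ s * ∫ x in (· + c) ⁻¹' Ω, f x ^ s ∂μ := by
  simp_rw [mul_rpow ha (hf _)]
  rw [integral_const_mul, setIntegral_comp_sub_right fun x => f x ^ s]

lemma setIntegral_norm_fderiv_mul_comp_sub_rpow [NormedSpace ℝ E] [μ.IsAddRightInvariant] {a : ℝ}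
    (ha : 0 ≤ a) (f : E → ℝ) (c : E) (p : ℝ) :
    ∫ x in Ω, ‖fderiv ℝ (fun y => a * f (y - c)) x‖ ^ p ∂μ =
      a ^ p * ∫ x in (· + c) ⁻¹' Ω, ‖fderiv ℝ f x‖ ^ p ∂μ := by
  have hfderiv (x : E) : fderiv ℝ (fun y => a * f (y - c)) x = a • fderiv ℝ f (x - c) := by
    rw [← fderiv_comp_sub c]
    exact congrFun (fderiv_const_smul_field a) x
  simp_rw [hfderiv, norm_smul, Real.norm_of_nonneg ha, mul_rpow ha (norm_nonneg _)]
  rw [integral_const_mul, setIntegral_comp_sub_right fun x => ‖fderiv ℝ f x‖ ^ p]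

end NormedSpace

variable {N : ℕ} {p q R : ℝ} {Ω : Set (EuclideanSpace ℝ (Fin N))} {K L : NNReal}
  {f g w : EuclideanSpace ℝ (Fin N) → ℝ}

lemma muPQ_le_rayleighQuot (p : ℝ) (hf : LipschitzOnWith K f (closure Ω)) (hne : ∃ x ∈ Ω, f x ≠ 0)
    (h : ∫ x in Ω, |f x| ^ (q - 2) * f x = 0) : muPQ p q Ω ≤ rayleighQuot p q Ω f := by
  refine csInf_le ⟨0, ?_⟩ ⟨f, K, hf, hne, h, rfl⟩
  rintro _ ⟨u, -, -, -, -, rfl⟩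
  exact rayleighQuot_nonneg p q Ω u

lemma muPQ_le_of_eq_zero_or_eq_zero (hp : 0 < p) (hq : 1 < q) (hΩ : Bornology.IsBounded Ω)
    (hf : LipschitzWith K f) (hg : LipschitzWith L g) (hf₀ : ∀ x, 0 ≤ f x) (hg₀ : ∀ x, 0 ≤ g x)
    (h : ∀ x, f x = 0 ∨ g x = 0) (hpos : 0 < ∫ x in Ω, f x ^ (q - 1))
    (heq : ∫ x in Ω, f x ^ (q - 1) = ∫ x in Ω, g x ^ (q - 1)) :
    muPQ p q Ω ≤ ((∫ x in Ω, ‖fderiv ℝ f x‖ ^ p) + ∫ x in Ω, ‖fderiv ℝ g x‖ ^ p) /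
      ((∫ x in Ω, f x ^ q) + ∫ x in Ω, g x ^ q) ^ (p / q) := by
  have hq₀ : 0 < q := one_pos.trans hq
  have hq₁ : 0 < q - 1 := sub_pos.2 hq
  have hint {u : EuclideanSpace ℝ (Fin N) → ℝ} (hu : Continuous u) {s : ℝ} (hs : 0 < s) :
      IntegrableOn (fun x => u x ^ s) Ω := integrableOn_rpow_of_isBounded hu hΩ hs.le
  have hne : ∃ x ∈ Ω, f x - g x ≠ 0 := by
    by_contra! hcontra
    refine hpos.ne' (setIntegral_eq_zero_of_forall_eq_zero fun x hx => ?_)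
    have hfg := sub_eq_zero.1 (hcontra x hx)
    rw [show f x = 0 by simpa [hfg] using h x, zero_rpow hq₁.ne']
  have horth : ∫ x in Ω, |f x - g x| ^ (q - 2) * (f x - g x) = 0 := by
    simp_rw [abs_rpow_mul_sub_of_eq_zero_or_eq_zero (hf₀ _) (hg₀ _) hq.ne' (h _)]
    rw [integral_sub (hint hf.continuous hq₁) (hint hg.continuous hq₁), heq, sub_self]
  refine (muPQ_le_rayleighQuot p (hf.sub hg).lipschitzOnWith hne horth).trans_eq ?_
  rw [rayleighQuot]
  simp_rw [abs_sub_rpow_of_eq_zero_or_eq_zero (hf₀ _) (hg₀ _) hq₀.ne' (h _)]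
  rw [integral_add (hint hf.continuous hq₀) (hint hg.continuous hq₀),
    ← integral_add (integrableOn_norm_fderiv_rpow_of_isBounded hf hΩ hp.le)
      (integrableOn_norm_fderiv_rpow_of_isBounded hg hΩ hp.le)]
  congr 1
  refine integral_congr_ae (ae_restrict_of_ae ?_)
  filter_upwards [hf.ae_differentiableAt, hg.ae_differentiableAt] with x hfx hgx
  exact norm_fderiv_sub_rpow_of_eq_zero_or_eq_zero hp.ne' hfx hgx hf₀ hg₀ (h x)

lemma mul_comp_sub_eq_zero_or_eq_zero {E : Type*} [SeminormedAddCommGroup E] {w : E → ℝ}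
    (hR : ∀ x, R ≤ ‖x‖ → w x = 0) {x₀ x₁ : E} (hdist : 2 * R ≤ dist x₀ x₁) (a b : ℝ) (x : E) :
    a * w (x - x₀) = 0 ∨ b * w (x - x₁) = 0 := by
  have htri := dist_triangle_left x₀ x₁ x
  rw [dist_eq_norm x x₀, dist_eq_norm x x₁] at htri
  rcases le_or_gt R ‖x - x₀‖ with hx | hx
  · exact Or.inl (by rw [hR _ hx, mul_zero])
  · exact Or.inr (by rw [hR _ (by linarith), mul_zero])

lemma exists_nonneg_rpow_mul_eq_one {I s : ℝ} (hI : 0 < I) (hs : s ≠ 0) :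
    ∃ a : ℝ, 0 ≤ a ∧ a ^ s * I = 1 :=
  ⟨I⁻¹ ^ s⁻¹, by positivity, by rw [rpow_inv_rpow (by positivity) hs, inv_mul_cancel₀ hI.ne']⟩

/-- The test function is `a w(· - x₀) - b w(· - x₁)`, with `a` and `b` normalizing the two integrals
in the constraint; Hölder's inequality then removes them from the Rayleigh quotient. -/
lemma muPQ_le_of_setIntegral_norm_fderiv_rpow_le {l : ℝ} {x₀ x₁ : EuclideanSpace ℝ (Fin N)}
    (hp : 0 < p) (hpq : p ≤ q) (hq : 1 < q) (hΩ : Bornology.IsBounded Ω) (hw : LipschitzWith K w)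
    (hw₀ : ∀ x, 0 ≤ w x) (hR : ∀ x, R ≤ ‖x‖ → w x = 0) (hdist : 2 * R ≤ dist x₀ x₁) (hl : 0 ≤ l)
    (hpos : ∀ c ∈ ({x₀, x₁} : Set _), 0 < ∫ x in (· + c) ⁻¹' Ω, w x ^ (q - 1))
    (hle : ∀ c ∈ ({x₀, x₁} : Set _), ∫ x in (· + c) ⁻¹' Ω, ‖fderiv ℝ w x‖ ^ p ≤
      l * ∫ x in (· + c) ⁻¹' Ω, w x ^ q) :
    muPQ p q Ω ≤ l * ((∫ x in (· + x₀) ⁻¹' Ω, w x ^ q) + ∫ x in (· + x₁) ⁻¹' Ω, w x ^ q) ^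
      (1 - p / q) := by
  obtain ⟨a, ha, haI⟩ :=
    exists_nonneg_rpow_mul_eq_one (hpos x₀ (mem_insert _ _)) (sub_pos.2 hq).ne'
  obtain ⟨b, hb, hbI⟩ :=
    exists_nonneg_rpow_mul_eq_one (hpos x₁ (mem_insert_of_mem _ rfl)) (sub_pos.2 hq).ne'
  have hlip (t : ℝ) (c) : LipschitzWith (‖t‖₊ * (K * 1)) fun x => t * w (x - c) :=
    (lipschitzWith_smul t).comp (hw.comp (IsometryEquiv.subRight c).isometry.lipschitz)
  have htest := muPQ_le_of_eq_zero_or_eq_zero hp hq hΩ (hlip a x₀) (hlip b x₁)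
    (fun x => mul_nonneg ha (hw₀ _)) (fun x => mul_nonneg hb (hw₀ _))
    (mul_comp_sub_eq_zero_or_eq_zero hR hdist a b)
  simp only [setIntegral_mul_comp_sub_rpow ha hw₀, setIntegral_mul_comp_sub_rpow hb hw₀,
    setIntegral_norm_fderiv_mul_comp_sub_rpow ha, setIntegral_norm_fderiv_mul_comp_sub_rpow hb,
    haI, hbI, zero_lt_one, true_imp_iff] at htest
  have hmass (c) : 0 ≤ ∫ x in (· + c) ⁻¹' Ω, w x ^ q :=
    integral_nonneg fun x => rpow_nonneg (hw₀ x) q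
  have hm₀ := hmass x₀
  have hm₁ := hmass x₁
  have hle₀ := hle x₀ (mem_insert _ _)
  have hle₁ := hle x₁ (mem_insert_of_mem _ rfl)
  set m₀ := ∫ x in (· + x₀) ⁻¹' Ω, w x ^ q
  set m₁ := ∫ x in (· + x₁) ⁻¹' Ω, w x ^ q
  refine htest.trans (div_le_of_le_mul₀ (by positivity) (by positivity) ?_)
  calc
    _ ≤ a ^ p * (l * m₀) + b ^ p * (l * m₁) := by gcongr
    _ = l * (a ^ p * m₀ + b ^ p * m₁) := by ring
    _ ≤ l * ((m₀ + m₁) ^ (1 - p / q) * (a ^ q * m₀ + b ^ q * m₁) ^ (p / q)) := by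
      gcongr
      exact rpow_mul_add_rpow_mul_le hp hpq ha hb hm₀ hm₁
    _ = _ := (mul_assoc _ _ _).symm

end NeumannTestFunction

section DiameterEndpoints

lemma exists_mem_closure_dist_eq_diam {X : Type*} [PseudoMetricSpace X] [ProperSpace X] {s : Set X}
    (hs : Bornology.IsBounded s) (hne : s.Nonempty) :
    ∃ x ∈ closure s, ∃ y ∈ closure s, dist x y = diam s := by
  obtain ⟨⟨x, y⟩, ⟨hx, hy⟩, hmax⟩ := (hs.isCompact_closure.prod hs.isCompact_closure).exists_isMaxOn
    (hne.closure.prod hne.closure) continuous_dist.continuousOn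
  refine ⟨x, hx, y, hy, le_antisymm ?_ (diam_le_of_forall_dist_le dist_nonneg fun u hu v hv =>
    hmax (mk_mem_prod (subset_closure hu) (subset_closure hv)))⟩
  rw [← diam_closure]
  exact dist_le_diam_of_mem hs.closure hx hy

lemma diam_pos_of_isOpen {X : Type*} [MetricSpace X] [∀ x : X, (𝓝[≠] x).NeBot] {s : Set X}
    (ho : IsOpen s) (hb : Bornology.IsBounded s) (hne : s.Nonempty) : 0 < diam s := by
  obtain ⟨x, hx⟩ := hne
  exact diam_pos (infinite_of_mem_nhds x (ho.mem_nhds hx)).nontrivial hb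

lemma isBounded_preimage_add_right {E : Type*} [SeminormedAddCommGroup E] {s : Set E}
    (hs : Bornology.IsBounded s) (x : E) :
    Bornology.IsBounded ((· + x) ⁻¹' s) :=
  (IsometryEquiv.addRight x).isometry.antilipschitz.isBounded_preimage hs

lemma preimage_add_right_inter_ball_nonempty {E : Type*} [SeminormedAddCommGroup E] {s : Set E}
    {x : E} (hx : x ∈ closure s) {r : ℝ} (hr : 0 < r) :
    ((· + x) ⁻¹' s ∩ ball 0 r).Nonempty := by
  obtain ⟨y, hy, hyx⟩ := mem_closure_iff.1 hx r hr
  exact ⟨y - x, by simpa using hy, by rwa [mem_ball_zero_iff, ← dist_eq_norm, dist_comm]⟩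

section NormedSpace

variable {E : Type*} [NormedAddCommGroup E] [NormedSpace ℝ E] {s : Set E} {x y : E}

lemma subset_ball_diam_of_isOpen (ho : IsOpen s) (hb : Bornology.IsBounded s) (hd : diam s ≠ 0)
    (hx : x ∈ closure s) : s ⊆ ball x (diam s) := by
  rw [← interior_closedBall x hd]
  refine interior_maximal (fun y hy => ?_) ho
  rw [mem_closedBall, ← diam_closure]
  exact dist_le_diam_of_mem hb.closure (subset_closure hy) hx

lemma preimage_add_right_subset_ball (ho : IsOpen s) (hb : Bornology.IsBounded s)
    (hd : diam s ≠ 0) (hy : y ∈ closure s) (x : E) :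
    (· + x) ⁻¹' s ⊆ ball (y - x) (diam s) := fun z hz => by
  have hzs := subset_ball_diam_of_isOpen ho hb hd hy hz
  rwa [mem_ball, dist_eq_norm, ← sub_sub_eq_add_sub, ← dist_eq_norm] at hzs

lemma smul_mem_preimage_add_right (hc : Convex ℝ s) (ho : IsOpen s) (hx : x ∈ closure s)
    (hy : y ∈ (· + x) ⁻¹' s) {t : ℝ} (ht : t ∈ Ioc (0 : ℝ) 1) : t • y ∈ (· + x) ⁻¹' s := by
  have h := hc.add_smul_sub_mem_interior' hx (ho.interior_eq.symm ▸ hy) ht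
  rwa [ho.interior_eq, add_sub_cancel_right, add_comm] at h

lemma ball_norm_disjoint_ball_neg_norm (e : E) : Disjoint (ball e ‖e‖) (ball (-e) ‖e‖) :=
  ball_disjoint_ball (by rw [dist_eq_norm, sub_neg_eq_add, ← two_smul ℝ e, norm_smul,
    Real.norm_two, two_mul])

end NormedSpace

section InnerProductSpace

variable {E : Type*} [NormedAddCommGroup E] [InnerProductSpace ℝ E] [FiniteDimensional ℝ E]

lemma exists_norm_eq_inner_eq_zero (hE : 2 ≤ finrank ℝ E) (e : E) {r : ℝ} (hr : 0 ≤ r) :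
    ∃ y : E, ‖y‖ = r ∧ inner ℝ y e = 0 := by
  have hsum := (ℝ ∙ e).finrank_add_finrank_orthogonal
  have hspan : finrank ℝ (ℝ ∙ e) ≤ 1 := (finrank_span_le_card {e}).trans_eq (by simp)
  have : Nontrivial (ℝ ∙ e)ᗮ := nontrivial_of_finrank_pos (R := ℝ) (by lia)
  obtain ⟨y, hy⟩ := exists_norm_eq (ℝ ∙ e)ᗮ hr
  exact ⟨y, hy, Submodule.mem_orthogonal_singleton_iff_inner_left.1 y.2⟩

lemma compl_closedBall_union_inter_ball_nonempty (hE : 2 ≤ finrank ℝ E) (e : E) {r : ℝ}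
    (hr : 0 < r) :
    ((closedBall e ‖e‖ ∪ closedBall (-e) ‖e‖)ᶜ ∩ ball 0 r).Nonempty := by
  obtain ⟨y, hy, hye⟩ := exists_norm_eq_inner_eq_zero hE e (half_pos hr).le
  have hlt : ∀ z : E, inner ℝ y z = 0 → ‖z‖ < ‖y - z‖ := fun z hz => by
    have h := norm_sub_sq_eq_norm_sq_add_norm_sq_real hz
    refine lt_of_mul_self_lt_mul_self₀ (norm_nonneg _) ?_
    rw [h, hy]
    have : 0 < r / 2 * (r / 2) := by positivity
    linarith
  refine ⟨y, fun h => ?_, by rw [mem_ball_zero_iff, hy]; exact half_lt_self hr⟩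
  rcases h with h | h <;> rw [mem_closedBall, dist_eq_norm] at h
  · exact (hlt e hye).not_ge h
  · exact (hlt (-e) (by rw [inner_neg_right, hye, neg_zero])).not_ge (by rwa [norm_neg])

/-- Seen from one endpoint of a diameter, `s` lies in the ball of radius `diam s` about the other
one. -/
lemma exists_disjoint_preimage_add_right [Nontrivial E] (hE : 2 ≤ finrank ℝ E) {s : Set E}
    (ho : IsOpen s) (hb : Bornology.IsBounded s) (hne : s.Nonempty) {r : ℝ} (hr : 0 < r) :
    ∃ x ∈ closure s, ∃ y ∈ closure s, dist x y = diam s ∧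
      Disjoint ((· + x) ⁻¹' s) ((· + y) ⁻¹' s) ∧ ∃ U : Set E, IsOpen U ∧
        Disjoint ((· + x) ⁻¹' s ∪ (· + y) ⁻¹' s) U ∧ (U ∩ ball 0 r).Nonempty := by
  obtain ⟨x, hx, y, hy, hxy⟩ := exists_mem_closure_dist_eq_diam hb hne
  have hd := (diam_pos_of_isOpen ho hb hne).ne'
  have hnorm : ‖y - x‖ = diam s := by rw [← dist_eq_norm, dist_comm, hxy]
  have hsx := preimage_add_right_subset_ball ho hb hd hy x
  have hsy := preimage_add_right_subset_ball ho hb hd hx y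
  rw [← hnorm] at hsx hsy
  rw [← neg_sub y x] at hsy
  refine ⟨x, hx, y, hy, hxy, (ball_norm_disjoint_ball_neg_norm _).mono hsx hsy,
    (closedBall (y - x) ‖y - x‖ ∪ closedBall (-(y - x)) ‖y - x‖)ᶜ,
    (isClosed_closedBall.union isClosed_closedBall).isOpen_compl, ?_,
    compl_closedBall_union_inter_ball_nonempty hE _ hr⟩
  exact disjoint_compl_right.mono_left
    (union_subset_union (hsx.trans ball_subset_closedBall) (hsy.trans ball_subset_closedBall))

end InnerProductSpace

end DiameterEndpoints

section MainEstimate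

lemma measureReal_inter_ball_pos {X : Type*} [PseudoMetricSpace X] [ProperSpace X]
    [MeasurableSpace X] {μ : Measure X} [μ.IsOpenPosMeasure] [IsFiniteMeasureOnCompacts μ]
    {D : Set X} (hD : IsOpen D) {x : X} {r : ℝ} (hne : (D ∩ ball x r).Nonempty) :
    0 < μ.real (D ∩ ball x r) :=
  ENNReal.toReal_pos ((hD.inter isOpen_ball).measure_pos _ hne).ne'
    (measure_inter_lt_top_of_right_ne_top measure_ball_lt_top.ne).ne

lemma rpow_mul_measureReal_inter_ball_le_setIntegral {E : Type*} [NormedAddCommGroup E]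
    [ProperSpace E] [MeasurableSpace E] [BorelSpace E] {μ : Measure E}
    [IsFiniteMeasureOnCompacts μ] {w : E → ℝ} {c r s : ℝ} (hc : 0 ≤ c) (hs : 0 ≤ s)
    (hw : ∀ x, 0 ≤ w x) (hi : Integrable (fun x => w x ^ s) μ) (hcw : ∀ x, ‖x‖ ≤ r → c ≤ w x)
    {D : Set E} (hD : MeasurableSet D) :
    c ^ s * μ.real (D ∩ ball 0 r) ≤ ∫ x in D, w x ^ s ∂μ := calc
  _ = ∫ _ in D ∩ ball 0 r, c ^ s ∂μ := by rw [setIntegral_const, smul_eq_mul, mul_comm]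
  _ ≤ ∫ x in D ∩ ball 0 r, w x ^ s ∂μ :=
    setIntegral_mono_on
      (integrableOn_const (measure_inter_lt_top_of_right_ne_top measure_ball_lt_top.ne).ne)
      hi.integrableOn (hD.inter measurableSet_ball) fun x hx =>
        rpow_le_rpow hc (hcw x (mem_ball_zero_iff.1 hx.2).le) hs
  _ ≤ ∫ x in D, w x ^ s ∂μ :=
    setIntegral_mono_set hi.integrableOn (Eventually.of_forall fun x => rpow_nonneg (hw x) s)
      inter_subset_left.eventuallyLE

lemma setIntegral_rpow_pos_of_setIntegral_rpow_pos {α : Type*} [MeasurableSpace α] {μ : Measure α}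
    {D : Set α} {w : α → ℝ} {s t : ℝ} (hs : s ≠ 0) (ht : t ≠ 0) (hw : ∀ x, 0 ≤ w x)
    (hi : IntegrableOn (fun x => w x ^ s) D μ) (hpos : 0 < ∫ x in D, w x ^ t ∂μ) :
    0 < ∫ x in D, w x ^ s ∂μ := by
  have hnonneg : 0 ≤ fun x => w x ^ s := fun x => rpow_nonneg (hw x) s
  refine (integral_nonneg hnonneg).lt_of_ne' fun hzero => hpos.ne' (integral_eq_zero_of_ae ?_)
  filter_upwards [(integral_eq_zero_iff_of_nonneg hnonneg hi).1 hzero] with x hx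
  rw [(rpow_eq_zero (hw x) hs).1 hx, zero_rpow ht, Pi.zero_apply]

lemma setIntegral_add_setIntegral_add_setIntegral_le {α : Type*} [MeasurableSpace α]
    {μ : Measure α} {f : α → ℝ} (hf : Integrable f μ) (hf₀ : ∀ x, 0 ≤ f x) {s t u : Set α}
    (ht : MeasurableSet t) (hu : MeasurableSet u) (hst : Disjoint s t) (hstu : Disjoint (s ∪ t) u) :
    (∫ x in s, f x ∂μ) + (∫ x in t, f x ∂μ) + ∫ x in u, f x ∂μ ≤ ∫ x, f x ∂μ := by
  rw [← setIntegral_union hst ht hf.integrableOn hf.integrableOn,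
    ← setIntegral_union hstu hu hf.integrableOn hf.integrableOn]
  exact setIntegral_le_integral hf (Eventually.of_forall hf₀)

variable {N : ℕ} [Nontrivial (EuclideanSpace ℝ (Fin N))] {p q R ε κ : ℝ} {K : NNReal}
  {w : EuclideanSpace ℝ (Fin N) → ℝ} {Ω U : Set (EuclideanSpace ℝ (Fin N))}
  {x₀ x₁ : EuclideanSpace ℝ (Fin N)}

namespace IsNearMinimizer

lemma setIntegral_norm_fderiv_preimage_add_right_le (hw : IsNearMinimizer p q R ε K w)
    (hp : 0 < p) (hpq : p ≤ q) (hR : 0 < R) (hε : 0 ≤ ε) (hκ : 0 < κ) (hΩ : IsOpen Ω)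
    (hb : Bornology.IsBounded Ω) (hc : Convex ℝ Ω) (hx : x₀ ∈ closure Ω)
    (hle : κ ≤ ∫ x in (· + x₀) ⁻¹' Ω, w x ^ q) :
    ∫ x in (· + x₀) ⁻¹' Ω, ‖fderiv ℝ w x‖ ^ p ≤
      (lambdaPQ p q (ball (0 : EuclideanSpace ℝ (Fin N)) R) + ε / κ) *
        ∫ x in (· + x₀) ⁻¹' Ω, w x ^ q := by
  refine (hw.setIntegral_norm_fderiv_rpow_le hp hpq hR (hΩ.preimage (continuous_add_const x₀))
    (isBounded_preimage_add_right hb x₀) fun x hx' t ht =>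
      smul_mem_preimage_add_right hc hΩ hx hx' ht).trans ?_
  rw [add_mul]
  gcongr
  rw [div_mul_eq_mul_div, le_div_iff₀ hκ]
  gcongr

lemma muPQ_le (hw : IsNearMinimizer p q R ε K w) (hp : 0 < p) (hpq : p ≤ q) (hq : 1 < q)
    (hR : 0 < R) (hε : 0 ≤ ε) (hκ : 0 < κ) (hΩ : IsOpen Ω) (hb : Bornology.IsBounded Ω)
    (hc : Convex ℝ Ω) (hx₀ : x₀ ∈ closure Ω) (hx₁ : x₁ ∈ closure Ω) (hdist : 2 * R ≤ dist x₀ x₁)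
    (hU : MeasurableSet U) (hdisj : Disjoint ((· + x₀) ⁻¹' Ω) ((· + x₁) ⁻¹' Ω))
    (hdisjU : Disjoint ((· + x₀) ⁻¹' Ω ∪ (· + x₁) ⁻¹' Ω) U)
    (hκ₀ : κ ≤ ∫ x in (· + x₀) ⁻¹' Ω, w x ^ q) (hκ₁ : κ ≤ ∫ x in (· + x₁) ⁻¹' Ω, w x ^ q)
    (hκU : κ ≤ ∫ x in U, w x ^ q) :
    muPQ p q Ω ≤ (lambdaPQ p q (ball (0 : EuclideanSpace ℝ (Fin N)) R) + ε / κ) *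
      (1 - κ) ^ (1 - p / q) := by
  have hq₀ : 0 < q := one_pos.trans hq
  have hpos {D : Set (EuclideanSpace ℝ (Fin N))} (hD : κ ≤ ∫ x in D, w x ^ q) :
      0 < ∫ x in D, w x ^ (q - 1) :=
    setIntegral_rpow_pos_of_setIntegral_rpow_pos (sub_pos.2 hq).ne' hq₀.ne' hw.nonneg
      (hw.integrable_rpow (sub_pos.2 hq)).integrableOn (hκ.trans_le hD)
  have hl : 0 ≤ lambdaPQ p q (ball (0 : EuclideanSpace ℝ (Fin N)) R) + ε / κ :=
    add_nonneg (lambdaPQ_nonneg p q _) (by positivity)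
  have hmass := setIntegral_add_setIntegral_add_setIntegral_le (hw.integrable_rpow hq₀)
    (fun x => rpow_nonneg (hw.nonneg x) q) (hΩ.preimage (continuous_add_const x₁)).measurableSet
    hU hdisj hdisjU
  rw [hw.integral_rpow] at hmass
  have hθ : 0 ≤ 1 - p / q := sub_nonneg.2 ((div_le_one hq₀).2 hpq)
  refine (muPQ_le_of_setIntegral_norm_fderiv_rpow_le hp hpq hq hb hw.lipschitzWith hw.nonneg
    hw.eq_zero hdist hl ?_ ?_).trans (mul_le_mul_of_nonneg_left
      (rpow_le_rpow (by linarith) (by linarith) hθ) hl)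
  · rintro c (rfl | rfl)
    exacts [hpos hκ₀, hpos hκ₁]
  · rintro c (rfl | rfl)
    exacts [hw.setIntegral_norm_fderiv_preimage_add_right_le hp hpq hR hε hκ hΩ hb hc hx₀ hκ₀,
      hw.setIntegral_norm_fderiv_preimage_add_right_le hp hpq hR hε hκ hΩ hb hc hx₁ hκ₁]

end IsNearMinimizer

lemma exists_pos_forall_isNearMinimizer_mul_le_setIntegral {r : ℝ} (hp : 0 < p) (hq : 1 ≤ q)
    (hpq : ltCritical N p q) (hr : 0 < r) (hrR : r < R)
    (hl : 0 < lambdaPQ p q (ball (0 : EuclideanSpace ℝ (Fin N)) R)) :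
    ∃ c > 0, ∃ ε₀ > 0, ∀ ε ≤ ε₀, ∀ (K : NNReal) (w : EuclideanSpace ℝ (Fin N) → ℝ),
      IsNearMinimizer p q R ε K w → ∀ D : Set (EuclideanSpace ℝ (Fin N)), MeasurableSet D →
        c * volume.real (D ∩ ball 0 r) ≤ ∫ x in D, w x ^ q := by
  have hq₀ : 0 < q := one_pos.trans_le hq
  obtain ⟨c, hc, ε₀, hε₀, h⟩ := exists_pos_forall_isNearMinimizer_le hp hq hpq hr hrR hl
  exact ⟨c ^ q, rpow_pos_of_pos hc q, ε₀, hε₀, fun ε hε K w hw D hD =>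
    rpow_mul_measureReal_inter_ball_le_setIntegral hc.le hq₀.le hw.nonneg (hw.integrable_rpow hq₀)
      (h ε hε K w hw) hD⟩

lemma exists_forall_muPQ_le (hN : 2 ≤ N) (hp : 1 ≤ p) (hpq : p < q) (hq : ltCritical N p q)
    (hΩ : IsOpen Ω) (hb : Bornology.IsBounded Ω) (hc : Convex ℝ Ω) (hne : Ω.Nonempty) :
    ∃ κ ∈ Ioc (0 : ℝ) 1, ∃ ε₀ > 0, ∀ ε ∈ Ioc 0 ε₀, muPQ p q Ω ≤
      (lambdaPQ p q (ball (0 : EuclideanSpace ℝ (Fin N)) (diam Ω / 2)) + ε / κ) *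
        (1 - κ) ^ (1 - p / q) := by
  have hp₀ : 0 < p := one_pos.trans_le hp
  have hq₁ : 1 < q := hp.trans_lt hpq
  have hR : 0 < diam Ω / 2 := half_pos (diam_pos_of_isOpen hΩ hb hne)
  have hr : 0 < diam Ω / 4 := by linarith
  obtain ⟨c, hc₀, ε₀, hε₀, hmass⟩ := exists_pos_forall_isNearMinimizer_mul_le_setIntegral hp₀
    hq₁.le hq hr (by linarith) (lambdaPQ_pos hN hp (hp₀.trans hpq) hq isOpen_ball isBounded_ball
      (nonempty_ball.2 hR))
  obtain ⟨x₀, hx₀, x₁, hx₁, hdist, hdisj, U, hU, hdisjU, hUne⟩ :=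
    exists_disjoint_preimage_add_right (by rwa [finrank_euclideanSpace_fin]) hΩ hb hne hr
  have hopen (x : EuclideanSpace ℝ (Fin N)) : IsOpen ((· + x) ⁻¹' Ω) :=
    hΩ.preimage (continuous_add_const x)
  have hpos {x : EuclideanSpace ℝ (Fin N)} (hx : x ∈ closure Ω) :
      0 < volume.real ((· + x) ⁻¹' Ω ∩ ball 0 (diam Ω / 4)) :=
    measureReal_inter_ball_pos (hopen x) (preimage_add_right_inter_ball_nonempty hx hr)
  obtain ⟨ν, hν, hν₀, hν₁, hνU⟩ : ∃ ν > 0,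
      ν ≤ volume.real ((· + x₀) ⁻¹' Ω ∩ ball 0 (diam Ω / 4)) ∧
      ν ≤ volume.real ((· + x₁) ⁻¹' Ω ∩ ball 0 (diam Ω / 4)) ∧
      ν ≤ volume.real (U ∩ ball 0 (diam Ω / 4)) :=
    ⟨_, lt_min (hpos hx₀) (lt_min (hpos hx₁) (measureReal_inter_ball_pos hU hUne)),
      min_le_left _ _, (min_le_right _ _).trans (min_le_left _ _),
      (min_le_right _ _).trans (min_le_right _ _)⟩
  have hle {V : ℝ} (hV : ν ≤ V) : c * ν ≤ c * V := mul_le_mul_of_nonneg_left hV hc₀.le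
  have hκ : 0 < c * ν := mul_pos hc₀ hν
  refine ⟨c * ν, ⟨hκ, ?_⟩, ε₀, hε₀, fun ε hε => ?_⟩
  · obtain ⟨K, w, hw⟩ := exists_isNearMinimizer (N := N) hp (hp₀.trans hpq) hR hε₀
    rw [← hw.integral_rpow]
    exact ((hle hνU).trans (hmass ε₀ le_rfl K w hw U hU.measurableSet)).trans
      (setIntegral_le_integral (hw.integrable_rpow (hp₀.trans hpq))
        (Eventually.of_forall fun x => rpow_nonneg (hw.nonneg x) q))
  · obtain ⟨K, w, hw⟩ := exists_isNearMinimizer (N := N) hp (hp₀.trans hpq) hR hε.1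
    have hmass' (D) (hD : IsOpen D) := hmass ε hε.2 K w hw D hD.measurableSet
    exact hw.muPQ_le hp₀ hpq.le hq₁ hR hε.1.le hκ hΩ hb hc hx₀ hx₁ (by rw [hdist]; linarith)
      hU.measurableSet hdisj hdisjU ((hle hν₀).trans (hmass' _ (hopen x₀)))
      ((hle hν₁).trans (hmass' _ (hopen x₁))) ((hle hνU).trans (hmass' U hU))

theorem muPQ_lt_lambdaPQ_ball (hN : 2 ≤ N) (hp : 1 ≤ p) (hpq : p < q) (hq : ltCritical N p q)
    (hΩ : IsOpen Ω) (hb : Bornology.IsBounded Ω) (hc : Convex ℝ Ω) (hne : Ω.Nonempty) :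
    muPQ p q Ω < lambdaPQ p q (ball (0 : EuclideanSpace ℝ (Fin N)) (diam Ω / 2)) := by
  have hq₀ : 0 < q := one_pos.trans_le (hp.trans hpq.le)
  have hR : 0 < diam Ω / 2 := half_pos (diam_pos_of_isOpen hΩ hb hne)
  obtain ⟨κ, hκ, ε₀, hε₀, hle⟩ := exists_forall_muPQ_le hN hp hpq hq hΩ hb hc hne
  have hl : 0 < lambdaPQ p q (ball (0 : EuclideanSpace ℝ (Fin N)) (diam Ω / 2)) :=
    lambdaPQ_pos hN hp hq₀ hq isOpen_ball isBounded_ball (nonempty_ball.2 hR)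
  set l := lambdaPQ p q (ball (0 : EuclideanSpace ℝ (Fin N)) (diam Ω / 2))
  have hlim : Tendsto (fun ε => (l + ε / κ) * (1 - κ) ^ (1 - p / q)) (𝓝[>] 0)
      (𝓝 ((l + 0 / κ) * (1 - κ) ^ (1 - p / q))) :=
    (Continuous.tendsto (by fun_prop) 0).mono_left nhdsWithin_le_nhds
  rw [zero_div, add_zero] at hlim
  calc
    muPQ p q Ω ≤ l * (1 - κ) ^ (1 - p / q) :=
      ge_of_tendsto hlim (mem_of_superset (Ioc_mem_nhdsGT hε₀) hle)
    _ < l := mul_lt_of_lt_one_right hl (rpow_lt_one (sub_nonneg.2 hκ.2) (sub_lt_self 1 hκ.1)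
      (sub_pos.2 ((div_lt_one hq₀).2 hpq)))

end MainEstimate

theorem muPQ_lt_lambdaPQ_ball_diam_general {N : ℕ} (hN : 2 ≤ N) {p q : ℝ} (hp : 1 ≤ p)
    (hpq : p < q) (hq : ltCritical N p q) {Ω : Set (EuclideanSpace ℝ (Fin N))} (hΩo : IsOpen Ω)
    (hΩb : Bornology.IsBounded Ω) (hΩc : Convex ℝ Ω) (hΩne : Ω.Nonempty)
    (c : EuclideanSpace ℝ (Fin N)) {r : ℝ} (hr : 0 < r) :
    muPQ p q Ω < lambdaPQ p q (ball c r) *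
      (diam (ball c r) / diam Ω) ^ (p + N * p / q - N) := by
  have : NeZero N := ⟨by lia⟩
  have hR : 0 < diam Ω / 2 := half_pos (diam_pos_of_isOpen hΩo hΩb hΩne)
  have hratio : r / (diam Ω / 2) = diam (ball c r) / diam Ω := by
    rw [diam_ball_eq c hr.le, div_div_eq_mul_div, mul_comm]
  calc
    _ < lambdaPQ p q (ball (0 : EuclideanSpace ℝ (Fin N)) (diam Ω / 2)) :=
      muPQ_lt_lambdaPQ_ball hN hp hpq hq hΩo hΩb hΩc hΩne
    _ ≤ _ := hratio ▸ lambdaPQ_ball_le p q hr hR c 0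

/-- Theorem 4.1. Let `1 < p < q < p*`. For every open bounded convex
set `Ω ⊂ ℝ^N` and every open ball `B ⊂ ℝ^N`,
`μ_{p,q}(Ω) < λ_{p,q}(B) · (diam B / diam Ω)^(p + Np/q - N)`. -/
theorem muPQ_lt_lambdaPQ_ball_diam {N : ℕ} (hN : 2 ≤ N) (p q : ℝ) (hp : 1 < p)
    (hpq : p < q) (hq : ltCritical N p q)
    (Ω : Set (EuclideanSpace ℝ (Fin N))) (hΩo : IsOpen Ω)
    (hΩb : Bornology.IsBounded Ω) (hΩc : Convex ℝ Ω) (hΩne : Ω.Nonempty)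
    (c : EuclideanSpace ℝ (Fin N)) (r : ℝ) (hr : 0 < r) :
    muPQ p q Ω < lambdaPQ p q (ball c r) *
      (diam (ball c r) / diam Ω) ^ (p + N * p / q - N) :=
  muPQ_lt_lambdaPQ_ball_diam_general hN hp.le hpq hq hΩo hΩb hΩc hΩne c hr
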